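/- If a bijective continuous map f of the unit sphere bundle 𝒬 = ℂ^{n−m} × S^{2m+1} ⊂ ℂ^{n+1} (with m ≥ 1) extends holomorphically to a neighborhood of 𝒬 in ℂ^{n+1} and preserves 𝒬, and if moreover the Levi form of S^{2m+1} is positive definite, then f extends to a holomorphic automorphism of the domain ℬ = ℂ^{n−m} × B^{m+1}. -/

import Mathlib

open Complex

/-- `𝒬 = {∑_{j≤m}|z_j|² + |w|² = 1} ≅ ℂ^{n−m} × S^{2m+1}`. -/
def Qset (n m : ℕ) : Set ((Fin n → ℂ) × ℂ) :=
  {p | (∑ j : Fin n, if (j : ℕ) < m then ‖p.1 j‖ ^ 2 else 0) + ‖p.2‖ ^ 2 = 1}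

/-- `ℬ = {∑_{j≤m}|z_j|² + |w|² < 1} ≅ ℂ^{n−m} × B^{m+1}`. -/
def Bset (n m : ℕ) : Set ((Fin n → ℂ) × ℂ) :=
  {p | (∑ j : Fin n, if (j : ℕ) < m then ‖p.1 j‖ ^ 2 else 0) + ‖p.2‖ ^ 2 < 1}

/-!
In suitable coordinates `𝒬` is the boundary `Y × S` of the cylinder `Y × B` over a ball `B`. By
Hartogs' theorem `f` extends holomorphically across the cylinder, and the maximum principle shows
that the extension `F` maps the cylinder to itself. At a boundary point the Hopf lemma shows that
`dF` does not kill the normal direction, and positivity of the Levi form confines its kernel to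
the fibre directions. On a fibre `Y × {b}` the map `f` is injective, and by Liouville's theorem it
takes values in another fibre, so by Osgood's theorem its differential is injective there. Hence
`f` is locally biholomorphic along `𝒬`. Its local inverses glue to a holomorphic inverse near `𝒬`,
which extends across the cylinder in turn, and the identity theorem shows that the two extensions
are inverse to each other.
-/

open Set Filter Metric Topology

/-! ### Holomorphic maps in several variables -/

section Holomorphic

variable {X Y V : Type*} [NormedAddCommGroup X] [NormedSpace ℂ X]
  [NormedAddCommGroup Y] [NormedSpace ℂ Y] [NormedAddCommGroup V] [NormedSpace ℂ V]

theorem tendsto_add_smul (x v : X) (t : ℂ) :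
    Tendsto (fun p : X × ℂ => p.1 + p.2 • v) (𝓝 (x, t)) (𝓝 (x + t • v)) :=
  Continuous.tendsto (by fun_prop) (x, t)

/-- Holomorphy at a point, in several variables: complex differentiability at every point of a
neighbourhood. No neighbourhood is named, so that holomorphy along a closed set needs no
auxiliary open set. -/
def HolomorphicAt (f : X → V) (x : X) : Prop :=
  ∀ᶠ y in 𝓝 x, DifferentiableAt ℂ f y

namespace HolomorphicAt

variable {f g : X → V} {x : X}

theorem of_differentiable (hf : Differentiable ℂ f) : HolomorphicAt f x :=
  Eventually.of_forall hf

theorem differentiableAt (hf : HolomorphicAt f x) : DifferentiableAt ℂ f x :=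
  hf.self_of_nhds

theorem continuousAt (hf : HolomorphicAt f x) : ContinuousAt f x :=
  hf.differentiableAt.continuousAt

theorem eventually (hf : HolomorphicAt f x) : ∀ᶠ y in 𝓝 x, HolomorphicAt f y :=
  eventually_eventually_nhds.2 hf

theorem congr (hf : HolomorphicAt f x) (hfg : f =ᶠ[𝓝 x] g) : HolomorphicAt g x := by
  filter_upwards [hf, hfg.eventuallyEq_nhds] with y hy hfgy
  exact hy.congr_of_eventuallyEq hfgy.symm

theorem comp {f : V → Y} {g : X → V} (hf : HolomorphicAt f (g x)) (hg : HolomorphicAt g x) :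
    HolomorphicAt (fun y => f (g y)) x := by
  filter_upwards [hg.continuousAt.eventually hf, hg] with y hfy hgy
  exact hfy.comp y hgy

theorem clm_comp (L : V →L[ℂ] Y) (hf : HolomorphicAt f x) : HolomorphicAt (L ∘ f) x :=
  .comp (f := L) (.of_differentiable L.differentiable) hf

theorem smul {c : X → ℂ} (hc : HolomorphicAt c x) (hf : HolomorphicAt f x) :
    HolomorphicAt (fun y => c y • f y) x := by
  filter_upwards [hc, hf] with y hcy hfy
  exact hcy.smul hfy

theorem inv {c : X → ℂ} (hc : HolomorphicAt c x) (h0 : c x ≠ 0) :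
    HolomorphicAt (fun y => (c y)⁻¹) x := by
  filter_upwards [hc, hc.continuousAt.eventually_ne h0] with y hcy h0y
  exact hcy.fun_inv h0y

theorem eqOn_of_convex [CompleteSpace V] {C : Set X} (hC : IsOpen C) (hconv : Convex ℝ C)
    (hf : ∀ y ∈ C, HolomorphicAt f y) (hg : ∀ y ∈ C, HolomorphicAt g y) (hx : x ∈ C)
    (hfg : f =ᶠ[𝓝 x] g) : EqOn f g C := by
  intro y hy
  let line : ℂ → X := fun t => x + t • (y - x)
  have hline : Differentiable ℂ line := by fun_prop
  have hline_conv : Convex ℝ (line ⁻¹' C) := by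
    refine (hconv.translate_preimage_right x).is_linear_preimage (f := fun t : ℂ => t • (y - x)) ?_
    exact ((LinearMap.toSpanSingleton ℂ X (y - x)).restrictScalars ℝ).isLinear
  have analytic_of {φ : X → V} (hφ : ∀ z ∈ C, HolomorphicAt φ z) :
      AnalyticOnNhd ℂ (fun t => φ (line t)) (line ⁻¹' C) :=
    DifferentiableOn.analyticOnNhd
      (fun t ht => ((hφ _ ht).differentiableAt.comp t (hline t)).differentiableWithinAt)
      (hC.preimage hline.continuous)
  have h0 : line 0 = x := by simp [line]
  have h1 : line 1 = y := by simp [line]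
  have hfg0 : (fun t => f (line t)) =ᶠ[𝓝 0] fun t => g (line t) := by
    have := hline.continuous.tendsto 0
    rw [h0] at this
    exact this.eventually hfg
  simpa only [h1] using (analytic_of hf).eqOn_of_preconnected_of_eventuallyEq (analytic_of hg)
    hline_conv.isPreconnected (show line 0 ∈ C by rwa [h0]) hfg0 (show line 1 ∈ C by rwa [h1])

section FiniteDimensional

variable [FiniteDimensional ℂ X]

-- Schwarz's lemma, applied to `y ↦ f (y + h) - f y` on a fixed ball, bounds the increment of
-- `fderiv ℂ f` at the centre by the increment of `f`, which is uniformly small.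
theorem continuousAt_fderiv (hf : HolomorphicAt f x) : ContinuousAt (fderiv ℂ f) x := by
  have : ProperSpace X := FiniteDimensional.proper ℂ X
  obtain ⟨r, hr, hball⟩ := Metric.nhds_basis_closedBall.eventually_iff.1 hf.eventually
  rw [Metric.continuousAt_iff']
  intro ε hε
  have htranslate (z : X) : Tendsto (fun p : X × X => p.2 + (p.1 - x)) (𝓝 (x, z)) (𝓝 z) := by
    have hcont : Continuous fun p : X × X => p.2 + (p.1 - x) := by fun_prop
    simpa using hcont.tendsto (x, z)
  have hnear : ∀ᶠ y in 𝓝 x, ∀ z ∈ closedBall x r, DifferentiableAt ℂ f (z + (y - x)) ∧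
      dist (f (z + (y - x))) (f z) < ε * r / 8 := by
    refine (isCompact_closedBall x r).eventually_forall_of_forall_eventually fun z hz => ?_
    have hfz := hball hz
    refine ((htranslate z).eventually hfz).and ?_
    have hd : Tendsto (fun p : X × X => dist (f (p.2 + (p.1 - x))) (f p.2)) (𝓝 (x, z)) (𝓝 0) := by
      simpa using (hfz.continuousAt.tendsto.comp (htranslate z)).dist
        (hfz.continuousAt.tendsto.comp continuous_snd.continuousAt)
    exact hd.eventually_lt_const (by positivity)
  filter_upwards [hnear] with y hy
  let incr : X → V := fun z => f (z + (y - x)) - f z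
  have hincr : ∀ z ∈ closedBall x r,
      HasFDerivAt incr (fderiv ℂ f (z + (y - x)) - fderiv ℂ f z) z := fun z hz =>
    ((hasFDerivAt_comp_add_right _).2 (hy z hz).1.hasFDerivAt).sub
      (hball hz).differentiableAt.hasFDerivAt
  have hsmall : ∀ z ∈ closedBall x r, ‖incr z‖ ≤ ε * r / 8 := fun z hz => by
    rw [← dist_eq_norm]; exact (hy z hz).2.le
  have hmaps : MapsTo incr (ball x r) (closedBall (incr x) (ε * r / 4)) := fun z hz => by
    rw [mem_closedBall, dist_eq_norm]
    have := norm_sub_le (incr z) (incr x)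
    linarith [hsmall z (ball_subset_closedBall hz), hsmall x (mem_closedBall_self hr.le)]
  have hbound := Complex.norm_fderiv_le_div_of_mapsTo_ball
    (fun z hz => (hincr z (ball_subset_closedBall hz)).differentiableAt.differentiableWithinAt)
    hmaps hr
  rw [(hincr x (mem_closedBall_self hr.le)).fderiv, add_sub_cancel,
    show ε * r / 4 / r = ε / 4 by field_simp] at hbound
  rw [dist_eq_norm]
  linarith

theorem contDiffAt (hf : HolomorphicAt f x) : ContDiffAt ℂ 1 f x :=
  contDiffAt_one_iff.2 ⟨fderiv ℂ f, {y | HolomorphicAt f y}, hf.eventually,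
    fun _ hy => hy.continuousAt_fderiv.continuousWithinAt,
    fun _ hy => hy.differentiableAt.hasFDerivAt⟩

theorem hasStrictFDerivAt (hf : HolomorphicAt f x) : HasStrictFDerivAt f (fderiv ℂ f x) x :=
  hf.contDiffAt.hasStrictFDerivAt one_ne_zero

theorem differentiableAt_circleIntegral [CompleteSpace V] {K : X × ℂ → V} {c : ℂ} {R : ℝ}
    (hR : 0 ≤ R) (hK : ∀ z ∈ sphere c R, HolomorphicAt K (x, z)) :
    DifferentiableAt ℂ (fun y => ∮ z in C(c, R), K (y, z)) x := by
  have hsphere := circleMap_mem_sphere c hR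
  have hF {y : X} (hy : ∀ z ∈ sphere c R, HolomorphicAt K (y, z)) :
      Continuous fun θ => deriv (circleMap c R) θ • K (y, circleMap c R θ) := by
    have hKy : Continuous fun θ => K (y, circleMap c R θ) := continuous_iff_continuousAt.2 fun θ =>
      (hy _ (hsphere θ)).continuousAt.comp (f := fun θ => (y, circleMap c R θ)) (by fun_prop)
    simp only [deriv_circleMap]
    exact ((continuous_circleMap 0 R).mul_const I).smul hKy
  have hF' : Continuous fun θ => deriv (circleMap c R) θ •
      (fderiv ℂ K (x, circleMap c R θ)).comp (ContinuousLinearMap.inl ℂ X ℂ) := by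
    have hKx : Continuous fun θ => fderiv ℂ K (x, circleMap c R θ) :=
      continuous_iff_continuousAt.2 fun θ => (hK _ (hsphere θ)).continuousAt_fderiv.comp
        (f := fun θ => (x, circleMap c R θ)) (by fun_prop)
    simp only [deriv_circleMap]
    fun_prop
  obtain ⟨M, hM⟩ := (isCompact_sphere c R).exists_bound_of_continuousOn
    (f := fun z => fderiv ℂ K (x, z)) fun z hz => ((hK z hz).continuousAt_fderiv.comp
      (f := fun z => (x, z)) (by fun_prop)).continuousWithinAt
  have hbound : ∀ᶠ y in 𝓝 x, ∀ z ∈ sphere c R,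
      HolomorphicAt K (y, z) ∧ ‖fderiv ℂ K (y, z)‖ ≤ M + 1 :=
    (isCompact_sphere c R).eventually_forall_of_forall_eventually fun z hz =>
      (hK z hz).eventually.and ((hK z hz).continuousAt_fderiv.norm.eventually_le_const
        ((hM z hz).trans_lt (lt_add_one M)))
  refine (intervalIntegral.hasFDerivAt_integral_of_dominated_of_fderiv_le
    (F' := fun y θ => deriv (circleMap c R) θ •
      (fderiv ℂ K (y, circleMap c R θ)).comp (ContinuousLinearMap.inl ℂ X ℂ))
    (bound := fun _ => |R| * ((M + 1) * ‖ContinuousLinearMap.inl ℂ X ℂ‖)) hbound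
    (hbound.mono fun y hy => (hF fun z hz => (hy z hz).1).aestronglyMeasurable)
    ((hF hK).intervalIntegrable _ _) hF'.aestronglyMeasurable ?_ intervalIntegrable_const
    ?_).differentiableAt <;> refine Eventually.of_forall fun θ _ y hy => ?_
  · have hM' := (hy _ (hsphere θ)).2
    calc _ ≤ |R| * ‖(fderiv ℂ K (y, circleMap c R θ)).comp (ContinuousLinearMap.inl ℂ X ℂ)‖ := by
          simp [norm_smul]
      _ ≤ _ := by grw [ContinuousLinearMap.opNorm_comp_le, hM']
  · exact ((hy _ (hsphere θ)).1.differentiableAt.hasFDerivAt.comp y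
      (hasFDerivAt_prodMk_left y _)).const_smul _

theorem circleIntegral [CompleteSpace V] {K : X × ℂ → V} {c : ℂ} {R : ℝ} (hR : 0 ≤ R)
    (hK : ∀ z ∈ sphere c R, HolomorphicAt K (x, z)) :
    HolomorphicAt (fun y => ∮ z in C(c, R), K (y, z)) x := by
  have hnear : ∀ᶠ y in 𝓝 x, ∀ z ∈ sphere c R, HolomorphicAt K (y, z) :=
    (isCompact_sphere c R).eventually_forall_of_forall_eventually fun z hz => (hK z hz).eventually
  exact hnear.mono fun y => differentiableAt_circleIntegral hR

theorem fderiv_apply [CompleteSpace V] (hf : HolomorphicAt f x) (v : X) :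
    HolomorphicAt (fun y => fderiv ℂ f y v) x := by
  have hline (y : X) : Differentiable ℂ fun t : ℂ => y + t • v := by fun_prop
  have hf0 : ∀ᶠ t : ℂ in 𝓝 0, HolomorphicAt f (x + t • v) := by
    have := (hline x).continuous.tendsto 0
    simp only [zero_smul, add_zero] at this
    exact this.eventually hf.eventually
  obtain ⟨r, hr, hdisc⟩ := Metric.nhds_basis_closedBall.eventually_iff.1 hf0
  have hcauchy : ∀ᶠ y in 𝓝 x, (2 * Real.pi * I : ℂ)⁻¹ •
      (∮ z in C(0, r), (z ^ 2)⁻¹ • f (y + z • v)) = fderiv ℂ f y v := by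
    have hnear : ∀ᶠ y in 𝓝 x, ∀ z ∈ closedBall (0 : ℂ) r, DifferentiableAt ℂ f (y + z • v) :=
      (isCompact_closedBall 0 r).eventually_forall_of_forall_eventually fun z hz =>
        (tendsto_add_smul x v z).eventually (hdisc hz)
    filter_upwards [hnear] with y hy
    have hdc : DiffContOnCl ℂ (fun z : ℂ => f (y + z • v)) (ball 0 r) :=
      DifferentiableOn.diffContOnCl fun z hz => ((hy z (closure_ball_subset_closedBall hz)).comp z
        (hline y z)).differentiableWithinAt
    have hfy : HasFDerivAt f (fderiv ℂ f y) (y + (0 : ℂ) • v) := by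
      simpa using (hy 0 (mem_closedBall_self hr.le)).hasFDerivAt
    have hderiv : HasDerivAt (fun z : ℂ => f (y + z • v)) (fderiv ℂ f y v) 0 :=
      hfy.comp_hasDerivAt (0 : ℂ) <| by
        simpa using ((hasDerivAt_id (0 : ℂ)).smul_const v).const_add y
    have hformula := hdc.deriv_eq_smul_circleIntegral hr
    simp only [sub_zero, one_div, hderiv.deriv] at hformula
    rw [hformula, inv_smul_smul₀ Complex.two_pi_I_ne_zero]
  have hK (z : ℂ) (hz : z ∈ sphere (0 : ℂ) r) :
      HolomorphicAt (fun p : X × ℂ => (p.2 ^ 2)⁻¹ • f (p.1 + p.2 • v)) (x, z) := by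
    have hz0 : z ^ 2 ≠ 0 := pow_ne_zero 2 (ne_of_mem_sphere hz hr.ne')
    exact (inv (c := fun p : X × ℂ => p.2 ^ 2) (of_differentiable (by fun_prop)) hz0).smul
      (comp (f := f) (hdisc (sphere_subset_closedBall hz)) (of_differentiable (by fun_prop)))
  exact (smul (of_differentiable (differentiable_const _)) (circleIntegral hr.le hK)).congr hcauchy

end FiniteDimensional

end HolomorphicAt

end Holomorphic


/-! ### Injective holomorphic maps -/

section LocallyInjectiveAt

variable {X Y Z : Type*} [TopologicalSpace X]

/-- Local injectivity of a map at a point: injectivity on some neighbourhood of that point. -/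
def LocallyInjectiveAt (f : X → Z) (x : X) : Prop :=
  ∃ U ∈ 𝓝 x, InjOn f U

namespace LocallyInjectiveAt

theorem eventually {f : X → Z} {x : X} (hf : LocallyInjectiveAt f x) :
    ∀ᶠ y in 𝓝 x, LocallyInjectiveAt f y := by
  obtain ⟨U, hU, hinj⟩ := hf
  exact (eventually_mem_nhds_iff.2 hU).mono fun y hy => ⟨U, hy, hinj⟩

theorem of_injective {f : X → Z} (hf : Function.Injective f) (x : X) : LocallyInjectiveAt f x :=
  ⟨univ, univ_mem, hf.injOn⟩

theorem of_eventually_leftInverse {f : X → Z} {g : Z → X} {x : X}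
    (h : ∀ᶠ y in 𝓝 x, g (f y) = y) : LocallyInjectiveAt f x :=
  ⟨{y | g (f y) = y}, h, LeftInvOn.injOn fun _ hy => hy⟩

theorem comp [TopologicalSpace Y] {f : Y → Z} {g : X → Y} {x : X}
    (hf : LocallyInjectiveAt f (g x)) (hg : LocallyInjectiveAt g x) (hgc : ContinuousAt g x) :
    LocallyInjectiveAt (fun z => f (g z)) x := by
  obtain ⟨U, hU, hfU⟩ := hf
  obtain ⟨U', hU', hgU⟩ := hg
  exact ⟨U' ∩ g ⁻¹' U, inter_mem hU' (hgc hU),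
    hfU.comp (hgU.mono inter_subset_left) fun _ hz => hz.2⟩

end LocallyInjectiveAt

end LocallyInjectiveAt

section Osgood

variable {X V : Type*} [NormedAddCommGroup X] [NormedSpace ℂ X]
  [NormedAddCommGroup V] [NormedSpace ℂ V]

theorem not_locallyInjectiveAt_of_fderiv_eventually_eq_zero [Nontrivial X] {f : X → V} {x : X}
    (hf : HolomorphicAt f x) (hf' : ∀ᶠ y in 𝓝 x, fderiv ℂ f y = 0) :
    ¬ LocallyInjectiveAt f x := by
  rintro ⟨U, hU, hinj⟩
  obtain ⟨r, hr, hball⟩ := Metric.eventually_nhds_iff_ball.1 (hf.and (hf'.and hU))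
  have : (𝓝[≠] x).NeBot := Module.punctured_nhds_neBot ℂ X x
  obtain ⟨y, hy, hyx⟩ := ((eventually_nhdsWithin_of_eventually_nhds (ball_mem_nhds x hr)).and
    (self_mem_nhdsWithin (a := x) (s := {x}ᶜ))).exists
  refine hyx (hinj (hball y hy).2.2 (hball x (mem_ball_self hr)).2.2 ?_)
  exact isOpen_ball.is_const_of_fderiv_eq_zero (𝕜 := ℂ) (convex_ball x r).isPreconnected
    (fun z hz => (hball z hz).1.differentiableWithinAt) (fun z hz => (hball z hz).2.1) hy
    (mem_ball_self hr)

theorem nhds_le_map_of_locallyInjectiveAt {f : ℂ → ℂ} {p : ℂ} (hf : AnalyticAt ℂ f p)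
    (hinj : LocallyInjectiveAt f p) : 𝓝 (f p) ≤ map f (𝓝 p) := by
  refine hf.eventually_constant_or_nhds_le_map_nhds.resolve_left fun hconst => ?_
  obtain ⟨U, hU, hinjU⟩ := hinj
  obtain ⟨z, ⟨hz, hzU⟩, hzp⟩ :=
    ((eventually_nhdsWithin_of_eventually_nhds (hconst.and hU)).and
      (self_mem_nhdsWithin (a := p) (s := {p}ᶜ))).exists
  exact hzp (hinjU hzU (mem_of_mem_nhds hU) hz)

-- The local inverse is continuous by the open mapping theorem and differentiable off `f p`, hence
-- differentiable at `f p` by Riemann's removable singularity theorem.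
theorem HolomorphicAt.deriv_ne_zero_of_locallyInjectiveAt {f : ℂ → ℂ} {p : ℂ}
    (hf : HolomorphicAt f p) (hinj : LocallyInjectiveAt f p) : deriv f p ≠ 0 := by
  have hfa : AnalyticAt ℂ f p := Complex.analyticAt_iff_eventually_differentiableAt.2 hf
  have hpunctured : ∀ᶠ x in 𝓝[≠] p, deriv f x ≠ 0 := by
    refine hfa.deriv.eventually_eq_zero_or_eventually_ne_zero.resolve_left fun h0 => ?_
    refine not_locallyInjectiveAt_of_fderiv_eventually_eq_zero hf (h0.mono fun x hx => ?_) hinj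
    ext
    simpa using hx
  obtain ⟨U, hU, hinjU⟩ := id hinj
  let h := Function.invFunOn f U
  have hleft : ∀ᶠ x in 𝓝 p, ∀ᶠ y in 𝓝 x, h (f y) = y :=
    (eventually_mem_nhds_iff.2 hU).mono fun x hx =>
      mem_of_superset hx fun _ => hinjU.leftInvOn_invFunOn.eq
  have hcont : ∀ᶠ x in 𝓝 p, ContinuousAt h (f x) ∧ ∀ᶠ w in 𝓝 (f x), f (h w) = w := by
    filter_upwards [hleft, hfa.eventually_analyticAt, hinj.eventually] with x hx hfx hinjx
    have hle := nhds_le_map_of_locallyInjectiveAt hfx hinjx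
    refine ⟨?_, hle (hx.mono fun y hy => congrArg f hy)⟩
    rw [ContinuousAt, hx.self_of_nhds]
    exact (tendsto_map'_iff.2 (tendsto_id.congr' (hx.mono fun y hy => hy.symm))).mono_left hle
  have hdiff : ∀ᶠ w in 𝓝[≠] (f p), DifferentiableAt ℂ h w := by
    refine eventually_nhdsWithin_iff.2 (nhds_le_map_of_locallyInjectiveAt hfa hinj
      (eventually_map.2 ?_))
    filter_upwards [hf, hleft, hcont, eventually_nhdsWithin_iff.1 hpunctured]
      with x hfx hx hcx hx' hxp
    have hder : HasDerivAt f (deriv f x) (h (f x)) := by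
      rw [hx.self_of_nhds]
      exact hfx.hasDerivAt
    have hinv := hder.of_local_left_inverse hcx.1 (hx' fun h => hxp (congrArg f h)) hcx.2
    exact hinv.differentiableAt
  have hh := (Complex.analyticAt_of_differentiable_on_punctured_nhds_of_continuousAt hdiff
    hcont.self_of_nhds.1).differentiableAt.hasDerivAt
  have hid : HasDerivAt (fun x => h (f x)) 1 p :=
    (hasDerivAt_id p).congr_of_eventuallyEq hleft.self_of_nhds
  have hchain := hid.unique (hh.comp p hf.differentiableAt.hasDerivAt)
  intro h0
  simp [h0] at hchain

/-- The change of variables turning a function `φ` with `fderiv ℂ φ q v ≠ 0` into an affine one: it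
is tangent to the translation `x ↦ x - q` and moves points only along `v`. -/
noncomputable def straighten (φ : X → ℂ) (v q x : X) : X :=
  (x - q) + ((fderiv ℂ φ q v)⁻¹ * (φ x - φ q - fderiv ℂ φ q (x - q))) • v

section Straighten

variable {φ : X → ℂ} {v q : X}

theorem straighten_self : straighten φ v q q = 0 := by
  simp [straighten]

theorem fderiv_straighten_apply (hv : fderiv ℂ φ q v ≠ 0) (x : X) :
    fderiv ℂ φ q (straighten φ v q x) = φ x - φ q := by
  simp only [straighten, map_add, map_smul, smul_eq_mul]
  field_simp
  ring

theorem straighten_add_smul (hv : fderiv ℂ φ q v ≠ 0) {x : X} {t : ℂ}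
    (ht : φ (x + t • v) = φ x) : straighten φ v q (x + t • v) = straighten φ v q x := by
  have hsub : x + t • v - q = (x - q) + t • v := by abel
  simp only [straighten, hsub, ht, map_add, map_smul, smul_eq_mul]
  match_scalars <;> field_simp
  ring

theorem holomorphicAt_straighten (hφ : HolomorphicAt φ q) : HolomorphicAt (straighten φ v q) q := by
  filter_upwards [hφ] with x hx
  unfold straighten
  fun_prop

theorem fderiv_straighten (hφ : HolomorphicAt φ q) :
    fderiv ℂ (straighten φ v q) q = ContinuousLinearMap.id ℂ X := by
  have hsub : HasFDerivAt (fun x => x - q) (ContinuousLinearMap.id ℂ X) q :=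
    (hasFDerivAt_id q).sub_const q
  have hlin : HasFDerivAt (fun x => fderiv ℂ φ q (x - q)) (fderiv ℂ φ q) q :=
    HasFDerivAt.comp q (fderiv ℂ φ q).hasFDerivAt hsub
  have hremainder : HasFDerivAt (fun x => φ x - φ q - fderiv ℂ φ q (x - q))
      (0 : X →L[ℂ] ℂ) q := by
    exact ((hφ.differentiableAt.hasFDerivAt.sub_const (φ q)).fun_sub hlin).congr_fderiv (sub_self _)
  exact ((hsub.fun_add ((hremainder.const_mul (fderiv ℂ φ q v)⁻¹).smul_const v)).congr_fderiv
    (by ext; simp)).fderiv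

theorem fderiv_straighten_injective (hφ : HolomorphicAt φ q) :
    Function.Injective (fderiv ℂ (straighten φ v q) q) := by
  rw [fderiv_straighten hφ]
  exact Function.injective_id

end Straighten

theorem HolomorphicAt.analyticAt_line {J : X → ℂ} {q : X} (hJ : HolomorphicAt J q) (v : X) :
    AnalyticAt ℂ (fun t : ℂ => J (q + t • v)) 0 :=
  Complex.analyticAt_iff_eventually_differentiableAt.2 <|
    comp (f := J) (by simpa using hJ) (of_differentiable (by fun_prop))

theorem HolomorphicAt.deriv_line_eventuallyEq {J : X → ℂ} {q : X} (hJ : HolomorphicAt J q)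
    (v : X) : deriv (fun t : ℂ => J (q + t • v)) =ᶠ[𝓝 0] fun t => fderiv ℂ J (q + t • v) v := by
  have hline : Tendsto (fun t : ℂ => q + t • v) (𝓝 0) (𝓝 q) := by
    have hcont : Continuous fun t : ℂ => q + t • v := by fun_prop
    simpa using hcont.tendsto 0
  filter_upwards [hline.eventually hJ] with t ht
  exact (ht.hasFDerivAt.comp_hasDerivAt t
    (by simpa using ((hasDerivAt_id t).smul_const v).const_add q)).deriv

theorem HolomorphicAt.exists_line_order_ne_top {J : X → ℂ} {q : X} (hJ : HolomorphicAt J q)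
    (hne : ∃ᶠ x in 𝓝 q, J x ≠ 0) :
    ∃ v : X, analyticOrderAt (fun t : ℂ => J (q + t • v)) 0 ≠ ⊤ := by
  obtain ⟨r, hr, hball⟩ := Metric.eventually_nhds_iff_ball.1 hJ.eventually
  obtain ⟨x, hx0, hx⟩ := (hne.and_eventually (ball_mem_nhds q hr)).exists
  refine ⟨x - q, fun htop => hx0 ?_⟩
  let line : ℂ → X := fun t => q + t • (x - q)
  have hconv : Convex ℝ (line ⁻¹' ball q r) :=
    ((convex_ball q r).translate_preimage_right q).is_linear_preimage
      ((LinearMap.toSpanSingleton ℂ X (x - q)).restrictScalars ℝ).isLinear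
  have hzero := eqOn_of_convex (f := fun t => J (line t)) (g := fun _ => 0) (x := 0)
    (isOpen_ball.preimage (by fun_prop)) hconv
    (fun t ht => comp (f := J) (hball _ ht) (of_differentiable (by fun_prop)))
    (fun t _ => of_differentiable (differentiable_const 0)) (by simpa [line] using hr)
    (analyticOrderAt_eq_top.1 htop)
  simpa [line] using hzero (show (1 : ℂ) ∈ line ⁻¹' ball q r by simpa [line] using hx)

-- Otherwise the maximum principle for `1 / F` would give `1 / ‖F 0‖ ≤ 1 / m`.
theorem exists_zero_of_norm_lt_on_sphere {F : ℂ → ℂ} {m r : ℝ} (hr : 0 < r) (hm : 0 < m)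
    (hF : ∀ t ∈ closedBall (0 : ℂ) r, DifferentiableAt ℂ F t)
    (hsphere : ∀ t ∈ sphere (0 : ℂ) r, m < ‖F t‖) (h0 : ‖F 0‖ < m) :
    ∃ t ∈ closedBall (0 : ℂ) r, F t = 0 := by
  by_contra! hne
  have hmax := Complex.norm_le_of_forall_mem_frontier_norm_le (U := ball (0 : ℂ) r)
    (f := fun t => (F t)⁻¹) (C := m⁻¹) isBounded_ball
    (DifferentiableOn.diffContOnCl fun t ht =>
      have ht := closure_ball_subset_closedBall ht
      ((hF t ht).fun_inv (hne t ht)).differentiableWithinAt)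
    (fun t ht => by
      rw [norm_inv]
      exact inv_anti₀ hm (hsphere t (frontier_ball_subset_sphere ht)).le)
    (subset_closure (mem_ball_self hr))
  have hpos : 0 < ‖F 0‖ := norm_pos_iff.2 (hne 0 (mem_closedBall_self hr.le))
  rw [norm_inv, inv_le_inv₀ hpos hm] at hmax
  exact h0.not_ge hmax

theorem HolomorphicAt.eventually_exists_zero_line {J : X → ℂ} {q v : X} (hJ : HolomorphicAt J q)
    (hq : J q = 0) (hne : ∀ᶠ t in 𝓝[≠] (0 : ℂ), J (q + t • v) ≠ 0) {ε : ℝ} (hε : 0 < ε) :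
    ∀ᶠ x in 𝓝 q, ∃ t ∈ ball (0 : ℂ) ε, J (x + t • v) = 0 := by
  have hgood : ∀ᶠ t in 𝓝 (0 : ℂ), HolomorphicAt J (q + t • v) ∧
      (t ≠ 0 → J (q + t • v) ≠ 0) ∧ t ∈ ball 0 ε := by
    refine Eventually.and ?_ ((eventually_nhdsWithin_iff.1 hne).and (ball_mem_nhds 0 hε))
    have hcont : Continuous fun t : ℂ => q + t • v := by fun_prop
    exact hcont.continuousAt.eventually (by simpa using hJ.eventually)
  obtain ⟨r, hr, hdisc⟩ := Metric.nhds_basis_closedBall.eventually_iff.1 hgood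
  have hJcont (t : ℂ) (ht : t ∈ closedBall 0 r) :
      Tendsto (fun p : X × ℂ => ‖J (p.1 + p.2 • v)‖) (𝓝 (q, t)) (𝓝 ‖J (q + t • v)‖) :=
    ((hdisc ht).1.continuousAt.tendsto.comp (tendsto_add_smul q v t)).norm
  have hJne (t : ℂ) (ht : t ∈ sphere 0 r) : J (q + t • v) ≠ 0 :=
    (hdisc (sphere_subset_closedBall ht)).2.1 (ne_of_mem_sphere ht hr.ne')
  obtain ⟨m, hm, hmin⟩ : ∃ m > 0, ∀ t ∈ sphere (0 : ℂ) r, m < ‖J (q + t • v)‖ := by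
    obtain ⟨t₀, ht₀, hmin⟩ := (isCompact_sphere (0 : ℂ) r).exists_isMinOn
      (NormedSpace.sphere_nonempty.2 hr.le) (f := fun t => ‖J (q + t • v)‖) fun t ht =>
        ((hJcont t (sphere_subset_closedBall ht)).comp
          (Continuous.prodMk_right q).continuousAt).mono_left nhdsWithin_le_nhds
    have hpos := norm_pos_iff.2 (hJne t₀ ht₀)
    exact ⟨_, half_pos hpos, fun t ht => (half_lt_self hpos).trans_le (hmin ht)⟩
  have hdiff : ∀ᶠ x in 𝓝 q, ∀ t ∈ closedBall (0 : ℂ) r, DifferentiableAt ℂ J (x + t • v) :=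
    (isCompact_closedBall 0 r).eventually_forall_of_forall_eventually fun t ht =>
      (tendsto_add_smul q v t).eventually (hdisc ht).1
  have hcircle : ∀ᶠ x in 𝓝 q, ∀ t ∈ sphere (0 : ℂ) r, m < ‖J (x + t • v)‖ :=
    (isCompact_sphere 0 r).eventually_forall_of_forall_eventually fun t ht =>
      (hJcont t (sphere_subset_closedBall ht)).eventually_const_lt (hmin t ht)
  have hcentre : ∀ᶠ x in 𝓝 q, ‖J x‖ < m :=
    hJ.continuousAt.norm.eventually_lt_const (by simpa [hq] using hm)
  filter_upwards [hdiff, hcircle, hcentre] with x hdx hcx hx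
  obtain ⟨t, ht, hzero⟩ := exists_zero_of_norm_lt_on_sphere (F := fun t => J (x + t • v)) hr hm
    (fun t ht => (hdx t ht).comp t (by fun_prop)) hcx (by simpa using hx)
  exact ⟨t, (hdisc ht).2.2, hzero⟩

section FiniteDimensional

variable [FiniteDimensional ℂ X]

theorem HolomorphicAt.exists_localInverse {f : X → X} {x : X} (hf : HolomorphicAt f x)
    (hf' : Function.Injective (fderiv ℂ f x)) :
    ∃ g : X → X, HolomorphicAt g (f x) ∧ (∀ᶠ y in 𝓝 x, g (f y) = y) ∧
      ∀ᶠ z in 𝓝 (f x), f (g z) = z := by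
  have : CompleteSpace X := FiniteDimensional.complete ℂ X
  let f' : X ≃L[ℂ] X :=
    (LinearEquiv.ofInjectiveEndo (fderiv ℂ f x : X →ₗ[ℂ] X) hf').toContinuousLinearEquiv
  have hder : HasFDerivAt f (f' : X →L[ℂ] X) x := hf.differentiableAt.hasFDerivAt
  have hstrict := hf.contDiffAt.hasStrictFDerivAt' hder one_ne_zero
  refine ⟨hstrict.localInverse f f' x, ?_, hstrict.eventually_left_inverse,
    hstrict.eventually_right_inverse⟩
  exact ((hf.contDiffAt.to_localInverse hder one_ne_zero).eventually (by simp)).mono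
    fun z hz => hz.differentiableAt one_ne_zero

theorem HolomorphicAt.exists_levelSet_parametrization {φ : X → ℂ} {φ' : X →L[ℂ] ℂ} {q : X}
    (hφ : HolomorphicAt φ q) (hφ' : HasFDerivAt φ φ' q) (h0 : φ' ≠ 0) :
    ∃ ψ : φ'.ker → X, ψ 0 = q ∧ HolomorphicAt ψ 0 ∧ LocallyInjectiveAt ψ 0 ∧
      HasFDerivAt ψ φ'.ker.subtypeL 0 ∧ ∀ᶠ κ in 𝓝 0, φ (ψ κ) = φ q := by
  obtain rfl := hφ'.fderiv
  obtain ⟨v, hv⟩ : ∃ v, fderiv ℂ φ q v ≠ 0 := by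
    by_contra! h
    exact h0 (ContinuousLinearMap.ext h)
  obtain ⟨Ψ, hΨ, hleft, hright⟩ :=
    (holomorphicAt_straighten (v := v) hφ).exists_localInverse (fderiv_straighten_injective hφ)
  have hΨ0 : Ψ 0 = q := by simpa only [straighten_self] using hleft.self_of_nhds
  rw [straighten_self] at hΨ hright
  have hker : Continuous fun κ : (fderiv ℂ φ q).ker => (κ : X) := continuous_subtype_val
  have hker0 : Tendsto (fun κ : (fderiv ℂ φ q).ker => (κ : X)) (𝓝 0) (𝓝 0) := hker.tendsto 0
  have hΨ' : fderiv ℂ Ψ 0 = ContinuousLinearMap.id ℂ X := by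
    have hderiv : HasFDerivAt (straighten φ v q) (fderiv ℂ (straighten φ v q) q) (Ψ 0) := by
      rw [hΨ0]
      exact (holomorphicAt_straighten hφ).differentiableAt.hasFDerivAt
    have hid := (hderiv.comp 0 hΨ.differentiableAt.hasFDerivAt).unique
      ((hasFDerivAt_id (𝕜 := ℂ) (0 : X)).congr_of_eventuallyEq hright)
    rwa [fderiv_straighten hφ, ContinuousLinearMap.id_comp] at hid
  refine ⟨fun κ => Ψ κ, hΨ0,
    HolomorphicAt.comp (f := Ψ) hΨ (.of_differentiable (Submodule.subtypeL _).differentiable),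
    .comp (.of_eventually_leftInverse hright) (.of_injective Subtype.val_injective 0)
      hker.continuousAt, ?_, ?_⟩
  · have hcomp := hΨ.differentiableAt.hasFDerivAt.comp (0 : (fderiv ℂ φ q).ker)
      (Submodule.subtypeL _).hasFDerivAt
    rw [hΨ'] at hcomp
    exact hcomp
  · filter_upwards [hker0.eventually hright] with κ hκ
    have := fderiv_straighten_apply hv (Ψ κ)
    rwa [hκ, show fderiv ℂ φ q κ = 0 from κ.2, eq_comm, sub_eq_zero] at this

/-- A zero `q` of `J` is regular if near `q` the zero set of `J` is the zero set of a holomorphic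
function with nonzero differential at `q`, that is, a smooth hypersurface. -/
def IsRegularZero (J : X → ℂ) (q : X) : Prop :=
  J q = 0 ∧ ∃ G : X → ℂ, HolomorphicAt G q ∧ fderiv ℂ G q ≠ 0 ∧ ∀ᶠ x in 𝓝 q, G x = 0 ↔ J x = 0

theorem HolomorphicAt.isRegularZero {J G : X → ℂ} {q v : X} (hJ : HolomorphicAt J q)
    (hq : J q = 0) (hG : HolomorphicAt G q) (hv : fderiv ℂ G q v ≠ 0)
    (hJG : ∀ᶠ x in 𝓝 q, J x = 0 → G x = 0) : IsRegularZero J q := by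
  refine ⟨hq, G, hG, fun h => hv (by simp [h]), ?_⟩
  obtain ⟨Ψ, -, hleft, -⟩ :=
    (holomorphicAt_straighten (v := v) hG).exists_localInverse (fderiv_straighten_injective hG)
  have hv0 : v ≠ 0 := fun h => hv (by simp [h])
  have hline := tendsto_add_smul q v 0
  rw [zero_smul, add_zero] at hline
  have hinj : ∀ᶠ p : X × ℂ in 𝓝 (q, 0), G (p.1 + p.2 • v) = G p.1 → p.2 = 0 := by
    filter_upwards [hline.eventually hleft, continuous_fst.continuousAt.eventually hleft]
      with ⟨x, t⟩ hxt hx heq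
    rw [straighten_add_smul hv heq, hx, left_eq_add] at hxt
    exact (smul_eq_zero.1 hxt).resolve_right hv0
  have hboth := hinj.and (hline.eventually hJG)
  have hisolated : ∀ᶠ t in 𝓝[≠] (0 : ℂ), J (q + t • v) ≠ 0 := by
    refine eventually_nhdsWithin_iff.2 ?_
    filter_upwards [(Continuous.prodMk_right q).continuousAt.eventually hboth]
      with t ht ht0 hJt
    exact ht0 (ht.1 ((ht.2 hJt).trans (hJG.self_of_nhds hq).symm))
  rw [nhds_prod_eq, eventually_prod_iff] at hboth
  obtain ⟨px, hpx, pt, hpt, hnear⟩ := hboth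
  obtain ⟨ε, hε, hball⟩ := Metric.eventually_nhds_iff_ball.1 hpt
  filter_upwards [hpx, hJG, hJ.eventually_exists_zero_line hq hisolated hε]
    with x hx hJGx ⟨t, ht, hJt⟩
  refine ⟨fun hGx => ?_, hJGx⟩
  obtain ⟨hinj, hGt⟩ := hnear hx (hball t ht)
  have ht0 : t = 0 := hinj ((hGt hJt).trans hGx.symm)
  simpa [ht0] using hJt

-- Induction on the order `k` of `H` along `v`: either `∂H/∂v`, of order `k - 1`, still vanishes on
-- the zeros of `J` near `q`, or it is nonzero at some zero of `J` near `q`, where `H` serves as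
-- `G`.
theorem HolomorphicAt.frequently_isRegularZero_of_order {J H : X → ℂ} {q v : X} {k : ℕ}
    (hJ : HolomorphicAt J q) (hq : J q = 0) (hH : HolomorphicAt H q)
    (hJH : ∀ᶠ x in 𝓝 q, J x = 0 → H x = 0)
    (hk : analyticOrderAt (fun t : ℂ => H (q + t • v)) 0 = k) :
    ∃ᶠ x in 𝓝 q, IsRegularZero J x := by
  induction k generalizing H with
  | zero =>
    have hHq : H q ≠ 0 := by
      have := (hH.analyticAt_line v).analyticOrderAt_eq_zero.1 hk
      simpa using this
    exact absurd (hJH.self_of_nhds hq) hHq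
  | succ k ih =>
    by_cases hJH' : ∀ᶠ x in 𝓝 q, J x = 0 → fderiv ℂ H x v = 0
    · refine ih (hH.fderiv_apply v) hJH' ?_
      have hder := (hH.analyticAt_line v).analyticOrderAt_deriv_add_one
      simp only [zero_smul, add_zero, hJH.self_of_nhds hq, sub_zero, hk,
        analyticOrderAt_congr (hH.deriv_line_eventuallyEq v)] at hder
      exact_mod_cast WithTop.add_right_cancel ENat.one_ne_top hder
    · refine (Filter.not_eventually.1 hJH').mp ?_
      filter_upwards [hJ.eventually, hH.eventually, hJH.eventually_nhds] with x hJx hHx hJHx hx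
      obtain ⟨hx0, hxv⟩ := Classical.not_imp.1 hx
      exact hJx.isRegularZero hx0 hHx hxv hJHx

theorem HolomorphicAt.frequently_isRegularZero {J : X → ℂ} {q : X} (hJ : HolomorphicAt J q)
    (hq : J q = 0) (hne : ∃ᶠ x in 𝓝 q, J x ≠ 0) : ∃ᶠ x in 𝓝 q, IsRegularZero J x := by
  obtain ⟨v, hv⟩ := hJ.exists_line_order_ne_top hne
  obtain ⟨k, hk⟩ := ENat.ne_top_iff_exists.1 hv
  exact hJ.frequently_isRegularZero_of_order hq hJ (Eventually.of_forall fun _ => id) hk.symm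

theorem HolomorphicAt.det_fderiv {f : X → X} {x : X} (hf : HolomorphicAt f x) :
    HolomorphicAt (fun y => (fderiv ℂ f y).det) x := by
  have : CompleteSpace X := FiniteDimensional.complete ℂ X
  let b := Module.finBasis ℂ X
  have hentry : ∀ᶠ y in 𝓝 x, ∀ i j,
      DifferentiableAt ℂ (fun y => b.coord i (fderiv ℂ f y (b j))) y :=
    eventually_all.2 fun i => eventually_all.2 fun j =>
      comp (of_differentiable (b.coord i).toContinuousLinearMap.differentiable)
        (hf.fderiv_apply (b j))
  have hdet (y : X) : (fderiv ℂ f y).det =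
      (Matrix.of fun i j => b.coord i (fderiv ℂ f y (b j))).det := by
    rw [ContinuousLinearMap.det, ← LinearMap.det_toMatrix b]
    congr 1
    ext i j
    simp [LinearMap.toMatrix_apply]
  simp only [hdet, Matrix.det_apply', Matrix.of_apply]
  filter_upwards [hentry] with y hy
  refine .fun_sum fun σ _ => .const_mul ?_ _
  exact (HasFDerivAt.finsetProd fun i _ => (hy (σ i) i).hasFDerivAt).differentiableAt

theorem finrank_ker_add_one {m : X →L[ℂ] ℂ} (hm : m ≠ 0) :
    Module.finrank ℂ m.ker + 1 = Module.finrank ℂ X :=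
  Module.Dual.finrank_ker_add_one_of_ne_zero (f := (m : X →ₗ[ℂ] ℂ)) fun h =>
    hm (ContinuousLinearMap.ext fun v => DFunLike.congr_fun h v)

theorem exists_injOn_ker_projection {ℓ m : X →L[ℂ] ℂ} (hℓ : ℓ ≠ 0) (hm : m ≠ 0) :
    ∃ p : X →L[ℂ] m.ker, InjOn p {y | ℓ y = 0} := by
  obtain ⟨π, hπ⟩ := ContinuousLinearMap.ker_closedComplemented_of_finiteDimensional_range ℓ
  let e := ContinuousLinearEquiv.ofFinrankEq
    (Nat.add_right_cancel ((finrank_ker_add_one hℓ).trans (finrank_ker_add_one hm).symm))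
  refine ⟨(e : _ →L[ℂ] _) ∘L π, fun y hy z hz hyz => ?_⟩
  have hπyz : π y = π z := e.injective hyz
  exact congrArg Subtype.val ((hπ ⟨y, hy⟩).symm.trans (hπyz.trans (hπ ⟨z, hz⟩)))

theorem HolomorphicAt.exists_hyperplane_reduction {f : X → X} {x : X} (hf : HolomorphicAt f x)
    (hinj : LocallyInjectiveAt f x) {ℓ : X →L[ℂ] ℂ} (hℓ : ℓ ∘L fderiv ℂ f x ≠ 0) :
    ∃ F : (ℓ ∘L fderiv ℂ f x).ker → (ℓ ∘L fderiv ℂ f x).ker, HolomorphicAt F 0 ∧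
      LocallyInjectiveAt F 0 ∧
      (Function.Injective (fderiv ℂ F 0) → Function.Injective (fderiv ℂ f x)) := by
  obtain ⟨ψ, hψ0, hψ, hψinj, hψ', hψℓ⟩ := exists_levelSet_parametrization
    (φ := fun y => ℓ (f y)) (hf.clm_comp ℓ)
    (ℓ.hasFDerivAt.comp x hf.differentiableAt.hasFDerivAt) hℓ
  have hℓ0 : ℓ ≠ 0 := fun h => hℓ (by rw [h, ContinuousLinearMap.zero_comp])
  obtain ⟨p, hp⟩ := exists_injOn_ker_projection hℓ0 hℓ
  have hfψ : HolomorphicAt (fun κ => f (ψ κ)) 0 := comp (f := f) (by rwa [hψ0]) hψ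
  refine ⟨fun κ => p (f (ψ κ) - f x), comp (f := fun y => p (y - f x))
    (of_differentiable (by fun_prop)) hfψ, ?_, fun hF => ?_⟩
  · obtain ⟨U, hU, hinjU⟩ :=
      LocallyInjectiveAt.comp (f := f) (by rwa [hψ0]) hψinj hψ.continuousAt
    refine ⟨_, inter_mem hU hψℓ, fun κ hκ κ' hκ' heq => hinjU hκ.1 hκ'.1 ?_⟩
    refine sub_left_injective (hp ?_ ?_ heq)
    · rw [mem_ofPred_eq, map_sub, hκ.2, sub_self]
    · rw [mem_ofPred_eq, map_sub, hκ'.2, sub_self]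
  · have hfx : HasFDerivAt f (fderiv ℂ f x) (ψ 0) := by
      rw [hψ0]
      exact hf.differentiableAt.hasFDerivAt
    have hder : HasFDerivAt (fun κ => p (f (ψ κ) - f x)) _ 0 :=
      p.hasFDerivAt.comp 0 ((hfx.comp 0 hψ').sub_const (f x))
    rw [hder.fderiv] at hF
    refine (injective_iff_map_eq_zero _).2 fun v hv => ?_
    have hv' : (⟨v, by simp [hv]⟩ : (ℓ ∘L fderiv ℂ f x).ker) = 0 :=
      (injective_iff_map_eq_zero _).1 hF _ ((congrArg p hv).trans (map_zero p))
    exact congrArg Subtype.val hv'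

theorem HolomorphicAt.fderiv_ne_zero_of_finrank_eq_one {f : X → X} {x : X}
    (hX : Module.finrank ℂ X = 1) (hf : HolomorphicAt f x) (hinj : LocallyInjectiveAt f x) :
    fderiv ℂ f x ≠ 0 := by
  have hX' : Module.finrank ℂ X = Module.finrank ℂ ℂ := by rw [hX, Module.finrank_self]
  let e := ContinuousLinearEquiv.ofFinrankEq hX'
  have hx : e.symm (e x) = x := e.symm_apply_apply x
  have hfe : HolomorphicAt (fun t => f (e.symm t)) (e x) :=
    comp (f := f) (by rwa [hx]) (of_differentiable e.symm.differentiable)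
  have hinje : LocallyInjectiveAt (fun t => e (f (e.symm t))) (e x) :=
    .comp (f := e) (.of_injective e.injective _)
      (.comp (f := f) (by rwa [hx]) (.of_injective e.symm.injective _)
        e.symm.continuous.continuousAt)
      hfe.continuousAt
  have hne := (comp (of_differentiable e.differentiable) hfe).deriv_ne_zero_of_locallyInjectiveAt
    hinje
  intro h0
  have hfx : HasFDerivAt f (0 : X →L[ℂ] X) (e.symm (e x)) := by
    rw [hx, ← h0]
    exact hf.differentiableAt.hasFDerivAt
  refine hne ?_
  have hder : HasDerivAt (fun t => e (f (e.symm t))) _ (e x) :=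
    e.hasFDerivAt.comp_hasDerivAt _ (hfx.comp_hasDerivAt _ e.symm.hasFDerivAt.hasDerivAt)
  simpa using hder.deriv

-- If the differential vanished at `x`, it would vanish along a smooth hypersurface near `x`, on
-- which `f` would then be constant.
theorem HolomorphicAt.fderiv_ne_zero_of_fderiv_eventually_injective {f : X → X} {x : X}
    (hX : 1 < Module.finrank ℂ X) (hf : HolomorphicAt f x) (hinj : LocallyInjectiveAt f x)
    (hdich : ∀ᶠ y in 𝓝 x, fderiv ℂ f y ≠ 0 → Function.Injective (fderiv ℂ f y)) :
    fderiv ℂ f x ≠ 0 := by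
  intro h0
  have hdet : ∀ᶠ y in 𝓝 x, (fderiv ℂ f y).det = 0 → fderiv ℂ f y = 0 := by
    filter_upwards [hdich] with y hy hdet
    by_contra hne
    exact (LinearMap.det_eq_zero_iff_ker_ne_bot.1 hdet) (LinearMap.ker_eq_bot.2 (hy hne))
  have hdetx : (fderiv ℂ f x).det = 0 := by
    rw [h0, ContinuousLinearMap.det, ContinuousLinearMap.toLinearMap_zero,
      LinearMap.det_zero, zero_pow (by omega)]
  by_cases hne : ∃ᶠ y in 𝓝 x, (fderiv ℂ f y).det ≠ 0
  · obtain ⟨y, ⟨hy, G, hG, hG0, hGdet⟩, hfy, hinjy, hdety⟩ :=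
      ((hf.det_fderiv.frequently_isRegularZero hdetx hne).and_eventually
        (hf.eventually.and (hinj.eventually.and hdet.eventually_nhds))).exists
    obtain ⟨ψ, hψ0, hψ, hψinj, -, hψG⟩ :=
      exists_levelSet_parametrization hG hG.differentiableAt.hasFDerivAt hG0
    have hGy : G y = 0 := hGdet.self_of_nhds.2 hy
    rw [← hψ0] at hfy hinjy hdety hGdet
    have : Nontrivial (fderiv ℂ G y).ker := by
      refine Module.nontrivial_of_finrank_pos (R := ℂ) ?_
      have := finrank_ker_add_one hG0
      omega
    refine not_locallyInjectiveAt_of_fderiv_eventually_eq_zero (comp hfy hψ) ?_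
      (hinjy.comp hψinj hψ.continuousAt)
    filter_upwards [hψ, hψG, hψ.continuousAt.eventually hfy,
      hψ.continuousAt.eventually (hdety.and hGdet)] with κ hψκ hGκ hfκ ⟨hdetκ, hGdetκ⟩
    have hfκ0 := hdetκ (hGdetκ.1 (hGκ.trans hGy))
    have hder : HasFDerivAt (fun κ => f (ψ κ)) _ κ := hfκ.hasFDerivAt.comp κ hψκ.hasFDerivAt
    rw [hder.fderiv, hfκ0, ContinuousLinearMap.zero_comp]
  · have : Nontrivial X := Module.nontrivial_of_finrank_pos (zero_lt_one.trans hX)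
    refine not_locallyInjectiveAt_of_fderiv_eventually_eq_zero hf ?_ hinj
    filter_upwards [hdet, Filter.not_frequently.1 hne] with y hy hy0
    exact hy (not_not.1 hy0)

-- Induction on the dimension: once `fderiv ℂ f x ≠ 0`, a level set of a component of `f` carries
-- the problem to one dimension less.
theorem HolomorphicAt.fderiv_injective_of_locallyInjectiveAt {f : X → X} {x : X}
    (hf : HolomorphicAt f x) (hinj : LocallyInjectiveAt f x) :
    Function.Injective (fderiv ℂ f x) := by
  induction hd : Module.finrank ℂ X using Nat.strong_induction_on generalizing X with
  | _ d ih =>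
    have injective_of_ne_zero {y : X} (hfy : HolomorphicAt f y) (hinjy : LocallyInjectiveAt f y)
        (hne : fderiv ℂ f y ≠ 0) : Function.Injective (fderiv ℂ f y) := by
      obtain ⟨v, hv⟩ := DFunLike.ne_iff.1 hne
      obtain ⟨ℓ, hℓ⟩ := SeparatingDual.exists_ne_zero (R := ℂ) hv
      have hℓf : ℓ ∘L fderiv ℂ f y ≠ 0 := fun h => hℓ (DFunLike.congr_fun h v)
      obtain ⟨F, hF, hFinj, hreduce⟩ := hfy.exists_hyperplane_reduction hinjy hℓf
      have hker := finrank_ker_add_one hℓf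
      exact hreduce (ih _ (by omega) hF hFinj rfl)
    rcases lt_trichotomy d 1 with hd1 | rfl | hd1
    · have : Subsingleton X := Module.finrank_zero_iff.1 (by omega : Module.finrank ℂ X = 0)
      exact Function.injective_of_subsingleton _
    · exact injective_of_ne_zero hf hinj (hf.fderiv_ne_zero_of_finrank_eq_one hd hinj)
    · refine injective_of_ne_zero hf hinj
        (hf.fderiv_ne_zero_of_fderiv_eventually_injective (by omega) hinj ?_)
      filter_upwards [hf.eventually, hinj.eventually] with y using injective_of_ne_zero

end FiniteDimensional

end Osgood

/-! ### Hartogs extension over a cylinder -/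

theorem circleIntegral_eq_of_differentiableAt_annulus {V : Type*} [NormedAddCommGroup V]
    [NormedSpace ℂ V] {F : ℂ → V} {r r' : ℝ} (hr : 0 < r) (hr' : 0 < r')
    (hF : ∀ σ : ℂ, ‖σ‖ ∈ uIcc r r' → DifferentiableAt ℂ F σ) :
    (∮ σ in C(0, r), F σ) = ∮ σ in C(0, r'), F σ := by
  wlog hle : r ≤ r' generalizing r r'
  · exact (this hr' hr (by rwa [uIcc_comm]) (le_of_not_ge hle)).symm
  rw [uIcc_of_le hle] at hF
  refine (Complex.circleIntegral_eq_of_differentiable_on_annulus_off_countable hr hle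
    countable_empty (fun σ hσ => ?_) fun σ hσ => ?_).symm
  · simp only [Set.mem_sdiff, mem_closedBall, mem_ball, dist_zero_right, not_lt] at hσ
    exact (hF σ ⟨hσ.2, hσ.1⟩).continuousAt.continuousWithinAt
  · simp only [Set.mem_sdiff, mem_closedBall, mem_ball, dist_zero_right, not_le] at hσ
    exact hF σ ⟨hσ.1.2.le, hσ.1.1.le⟩

section Cylinder

variable {X E V : Type*} [NormedAddCommGroup X] [NormedSpace ℂ X]
  [NormedAddCommGroup E] [InnerProductSpace ℂ E] [NormedAddCommGroup V] [NormedSpace ℂ V]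
  {P : X →L[ℂ] E}

theorem nhdsWithin_preimage_ball_neBot {q : X} (hq : q ∈ P ⁻¹' sphere 0 1) :
    (𝓝[P ⁻¹' ball 0 1] q).NeBot := by
  rw [← mem_closure_iff_nhdsWithin_neBot]
  have hradial : Tendsto (fun t : ℝ => (t : ℂ) • q) (𝓝[<] 1) (𝓝 q) := by
    have hcont : Continuous fun t : ℝ => (t : ℂ) • q := by fun_prop
    simpa using (hcont.tendsto 1).mono_left nhdsWithin_le_nhds
  refine mem_closure_of_tendsto hradial ?_
  filter_upwards [Ioo_mem_nhdsLT zero_lt_one] with t ht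
  have hPq : ‖P q‖ = 1 := by simpa using hq
  simpa [norm_smul, hPq, abs_of_pos ht.1] using ht.2

theorem isPreconnected_preimage_sphere [FiniteDimensional ℂ E] (hP : Function.Surjective P)
    (hE : 1 < Module.finrank ℂ E) : IsPreconnected (P ⁻¹' sphere 0 1) := by
  obtain ⟨R, hR⟩ := P.exists_rightInverse_of_surjective (LinearMap.range_eq_top.2 hP)
  have hPR (y : E) : P (R y) = y := DFunLike.congr_fun hR y
  have hrank : 1 < Module.rank ℝ E := by
    have : FiniteDimensional ℝ E := FiniteDimensional.complexToReal E
    rw [← Module.finrank_eq_rank, finrank_real_of_complex]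
    exact_mod_cast (by omega : 1 < 2 * Module.finrank ℂ E)
  have himage := ((isPreconnected_sphere hrank (0 : E) 1).prod
    (isPreconnected_univ (α := P.ker))).image (fun p => R p.1 + p.2) (by fun_prop)
  convert himage
  ext x
  constructor
  · exact fun hx => ⟨(P x, ⟨x - R (P x), by simp [hPR]⟩), ⟨hx, mem_univ _⟩, by simp⟩
  · rintro ⟨⟨y, k⟩, ⟨hy, -⟩, rfl⟩
    simpa [hPR, show P k = 0 from k.2] using hy

/-- The coordinate `⟨P e, P x⟩` of `x` along the axis `e`. -/
noncomputable def axisCoord (P : X →L[ℂ] E) (e : X) : X →L[ℂ] ℂ :=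
  innerSL ℂ (P e) ∘L P

/-- The point with axis coordinate `σ` on the complex line through `x` parallel to `e`. -/
noncomputable def axisLine (P : X →L[ℂ] E) (e x : X) (σ : ℂ) : X :=
  x + (σ - axisCoord P e x) • e

/-- The radius of the disc, in the coordinate of `axisLine P e x`, cut out of that line by the
cylinder `P ⁻¹' ball 0 1`. -/
noncomputable def axisRadius (P : X →L[ℂ] E) (e x : X) : ℝ :=
  √(1 - ‖P x‖ ^ 2 + ‖axisCoord P e x‖ ^ 2)

/-- The integrand of Cauchy's formula for `f` on the line `axisLine P e x`. -/
noncomputable def cauchyKernel (P : X →L[ℂ] E) (e : X) (f : X → V) (p : X × ℂ) : V :=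
  (p.2 - axisCoord P e p.1)⁻¹ • f (axisLine P e p.1 p.2)

/-- Cauchy's formula on the lines parallel to `e`. It only uses the values of `f` on the boundary of
the cylinder. -/
noncomputable def cauchyExtension (P : X →L[ℂ] E) (e : X) (f : X → V) (x : X) : V :=
  (2 * Real.pi * I : ℂ)⁻¹ • ∮ σ in C(0, axisRadius P e x), cauchyKernel P e f (x, σ)

section AxisLine

variable {e x : X}

theorem differentiable_axisLine :
    Differentiable ℂ fun p : X × ℂ => axisLine P e p.1 p.2 := by
  unfold axisLine
  fun_prop

theorem continuous_axisRadius : Continuous (axisRadius P e) := by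
  unfold axisRadius
  fun_prop

theorem axisLine_axisCoord : axisLine P e x (axisCoord P e x) = x := by
  simp [axisLine]

theorem norm_sq_map_axisLine (he : ‖P e‖ = 1) (σ : ℂ) :
    ‖P (axisLine P e x σ)‖ ^ 2 = ‖P x‖ ^ 2 - ‖axisCoord P e x‖ ^ 2 + ‖σ‖ ^ 2 := by
  let y := P x - axisCoord P e x • P e
  have horth : inner ℂ (P e) y = 0 := by
    simp [y, axisCoord, he]
  have hpythagoras (τ : ℂ) : ‖y + τ • P e‖ ^ 2 = ‖y‖ ^ 2 + ‖τ‖ ^ 2 := by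
    rw [norm_add_sq (𝕜 := ℂ), inner_smul_right, inner_eq_zero_symm.1 horth, norm_smul, he]
    simp
  have hx : P x = y + axisCoord P e x • P e := by simp [y]
  have hσ : P (axisLine P e x σ) = y + σ • P e := by
    simp only [axisLine, map_add, map_smul, y]
    module
  rw [hσ, hpythagoras, hx, hpythagoras]
  ring

theorem norm_axisCoord_lt_axisRadius (hx : x ∈ P ⁻¹' ball 0 1) :
    ‖axisCoord P e x‖ < axisRadius P e x := by
  have hx' : ‖P x‖ < 1 := by simpa using hx
  refine Real.lt_sqrt_of_sq_lt ?_
  nlinarith [norm_nonneg (P x)]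

theorem axisLine_mem_sphere (he : ‖P e‖ = 1) (hx : x ∈ P ⁻¹' ball 0 1) {σ : ℂ}
    (hσ : ‖σ‖ = axisRadius P e x) : axisLine P e x σ ∈ P ⁻¹' sphere 0 1 := by
  have hpos := (norm_nonneg _).trans_lt (norm_axisCoord_lt_axisRadius (e := e) hx)
  have hsq := norm_sq_map_axisLine (x := x) he σ
  rw [hσ, axisRadius, Real.sq_sqrt (Real.sqrt_pos.1 hpos).le] at hsq
  have h1 : ‖P (axisLine P e x σ)‖ ^ 2 = 1 := by rw [hsq]; ring
  simpa using (pow_eq_one_iff_of_nonneg (norm_nonneg _) two_ne_zero).1 h1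

theorem holomorphicAt_cauchyKernel {f : X → V} {σ : ℂ}
    (hf : HolomorphicAt f (axisLine P e x σ)) (hσ : ‖axisCoord P e x‖ < ‖σ‖) :
    HolomorphicAt (cauchyKernel P e f) (x, σ) := by
  have hne : σ - axisCoord P e x ≠ 0 := fun h => by
    rw [sub_eq_zero.1 h] at hσ
    exact hσ.false
  exact .smul (.inv (c := fun p : X × ℂ => p.2 - axisCoord P e p.1)
    (.of_differentiable (by fun_prop)) hne)
    (.comp (f := f) (x := (x, σ)) hf (.of_differentiable differentiable_axisLine))

theorem cauchyExtension_eq [CompleteSpace V] {f : X → V} (hx : x ∈ P ⁻¹' ball 0 1)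
    (hf : ∀ σ ∈ closedBall 0 (axisRadius P e x), DifferentiableAt ℂ f (axisLine P e x σ)) :
    cauchyExtension P e f x = f x := by
  have hline : Differentiable ℂ (axisLine P e x) := by unfold axisLine; fun_prop
  have hd : DifferentiableOn ℂ (fun σ => f (axisLine P e x σ)) (closedBall 0 (axisRadius P e x)) :=
    fun σ hσ => ((hf σ hσ).comp σ (hline σ)).differentiableWithinAt
  have hcauchy := hd.circleIntegral_sub_inv_smul (w := axisCoord P e x)
    (by simpa using norm_axisCoord_lt_axisRadius hx)
  simp only [cauchyExtension, cauchyKernel]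
  rw [hcauchy, inv_smul_smul₀ Complex.two_pi_I_ne_zero, axisLine_axisCoord]

-- By Cauchy's theorem the radius of the circle may be frozen while `x` varies.
theorem holomorphicAt_cauchyExtension [FiniteDimensional ℂ X] [CompleteSpace V] {f : X → V}
    (he : ‖P e‖ = 1) (hf : ∀ q ∈ P ⁻¹' sphere 0 1, HolomorphicAt f q) (hx : x ∈ P ⁻¹' ball 0 1) :
    HolomorphicAt (cauchyExtension P e f) x := by
  have hpos {y : X} (hy : y ∈ P ⁻¹' ball 0 1) : 0 < axisRadius P e y :=
    (norm_nonneg _).trans_lt (norm_axisCoord_lt_axisRadius hy)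
  have hkernel {σ : ℂ} (hσ : ‖σ‖ = axisRadius P e x) :
      HolomorphicAt (cauchyKernel P e f) (x, σ) :=
    holomorphicAt_cauchyKernel (hf _ (axisLine_mem_sphere he hx hσ))
      ((norm_axisCoord_lt_axisRadius hx).trans_eq hσ.symm)
  have hannulus : ∀ᶠ p : X × ℝ in 𝓝 (x, axisRadius P e x), ∀ ζ ∈ sphere (0 : ℂ) 1,
      DifferentiableAt ℂ (cauchyKernel P e f) (p.1, p.2 * ζ) := by
    refine (isCompact_sphere 0 1).eventually_forall_of_forall_eventually fun ζ hζ => ?_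
    have hcont : Continuous fun z : (X × ℝ) × ℂ => (z.1.1, (z.1.2 : ℂ) * z.2) := by fun_prop
    refine (hcont.tendsto ((x, axisRadius P e x), ζ)).eventually (hkernel ?_)
    rw [norm_mul, mem_sphere_zero_iff_norm.1 hζ, mul_one, norm_real,
      Real.norm_of_nonneg (hpos hx).le]
  rw [nhds_prod_eq, eventually_prod_iff] at hannulus
  obtain ⟨p, hp, p', hp', hdiff⟩ := hannulus
  obtain ⟨ε, hε, hball⟩ := Metric.eventually_nhds_iff_ball.1 hp'
  refine (HolomorphicAt.smul (.of_differentiable (differentiable_const (2 * Real.pi * I : ℂ)⁻¹))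
    (.circleIntegral (hpos hx).le fun σ hσ => hkernel (mem_sphere_zero_iff_norm.1 hσ))).congr ?_
  filter_upwards [hp, (isOpen_ball.preimage P.continuous).mem_nhds hx,
    continuous_axisRadius.continuousAt.eventually (ball_mem_nhds (axisRadius P e x) hε)]
    with y hy hyB hyr
  refine congrArg _ (circleIntegral_eq_of_differentiableAt_annulus (hpos hx) (hpos hyB)
    fun σ hσ => ?_)
  have hσball := hball _ ((convex_ball _ ε).ordConnected.uIcc_subset (mem_ball_self hε) hyr hσ)
  have hσ0 : 0 < ‖σ‖ := (lt_min (hpos hx) (hpos hyB)).trans_le hσ.1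
  have hdiffσ := hdiff hy hσball (σ / ‖σ‖) (by simp [hσ0.ne'])
  rw [mul_div_cancel₀ _ (by exact_mod_cast hσ0.ne')] at hdiffσ
  exact hdiffσ.comp σ (by fun_prop)

theorem cauchyExtension_eventuallyEq [CompleteSpace V] {f : X → V} (hx : ‖P x‖ = 1)
    (hex : axisCoord P e x = 0) (hf : HolomorphicAt f x) :
    ∀ᶠ y in 𝓝[P ⁻¹' ball 0 1] x, cauchyExtension P e f y = f y := by
  have hline : Tendsto (fun p : X × ℂ => axisLine P e p.1 p.2) (𝓝 (x, 0)) (𝓝 x) := by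
    have hcont := (differentiable_axisLine (P := P) (e := e)).continuous
    simpa [axisLine, hex] using hcont.tendsto (x, 0)
  have hradius : Tendsto (axisRadius P e) (𝓝 x) (𝓝 0) := by
    simpa [axisRadius, hx, hex] using (continuous_axisRadius (P := P) (e := e)).tendsto x
  have hdiff := hline.eventually hf
  rw [nhds_prod_eq, eventually_prod_iff] at hdiff
  obtain ⟨p, hp, p', hp', hdiff⟩ := hdiff
  obtain ⟨ε, hε, hball⟩ := Metric.eventually_nhds_iff_ball.1 hp'
  filter_upwards [self_mem_nhdsWithin, nhdsWithin_le_nhds hp,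
    nhdsWithin_le_nhds (hradius.eventually_lt_const hε)] with y hyB hy hyr
  exact cauchyExtension_eq hyB fun σ hσ => hdiff hy (hball σ (closedBall_subset_ball hyr hσ))

end AxisLine

theorem eventually_eq_nhdsWithin_cylinder [FiniteDimensional ℂ E] [CompleteSpace V]
    (hP : Function.Surjective P) (hE : 1 < Module.finrank ℂ E) {f g : X → V}
    (hf : ∀ q ∈ P ⁻¹' sphere 0 1, HolomorphicAt f q) (hg : ∀ x ∈ P ⁻¹' ball 0 1, HolomorphicAt g x)
    {q₀ q : X} (hq₀ : q₀ ∈ P ⁻¹' sphere 0 1) (hq : q ∈ P ⁻¹' sphere 0 1)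
    (h₀ : ∀ᶠ x in 𝓝[P ⁻¹' ball 0 1] q₀, g x = f x) :
    ∀ᶠ x in 𝓝[P ⁻¹' ball 0 1] q, g x = f x := by
  have hopen : IsOpen (P ⁻¹' ball 0 1) := isOpen_ball.preimage P.continuous
  have hconvex : Convex ℝ (P ⁻¹' ball 0 1) :=
    (convex_ball 0 1).linear_preimage (P.restrictScalars ℝ).toLinearMap
  refine ((isPreconnected_preimage_sphere hP hE).induction₂
    (fun a b => (∀ᶠ x in 𝓝[P ⁻¹' ball 0 1] a, g x = f x) ↔ ∀ᶠ x in 𝓝[P ⁻¹' ball 0 1] b, g x = f x)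
    (fun p hp => ?_) (fun _ _ _ _ _ _ => Iff.trans) (fun _ _ _ _ => Iff.symm) hq₀ hq).1 h₀
  obtain ⟨ε, hε, hball⟩ := Metric.eventually_nhds_iff_ball.1 (hf p hp).eventually
  have iff_eqOn {a : X} (ha : a ∈ ball p ε) (haQ : a ∈ P ⁻¹' sphere 0 1) :
      (∀ᶠ x in 𝓝[P ⁻¹' ball 0 1] a, g x = f x) ↔ EqOn g f (P ⁻¹' ball 0 1 ∩ ball p ε) := by
    refine ⟨fun h => ?_, fun h => ?_⟩
    · have := nhdsWithin_preimage_ball_neBot haQ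
      obtain ⟨c, hc, hcB, hcε⟩ := ((eventually_eventually_nhdsWithin.2 h).and
        (eventually_mem_nhdsWithin.and (nhdsWithin_le_nhds (isOpen_ball.mem_nhds ha)))).exists
      rw [hopen.nhdsWithin_eq hcB] at hc
      exact HolomorphicAt.eqOn_of_convex (hopen.inter isOpen_ball)
        (hconvex.inter (convex_ball p ε)) (fun y hy => hg y hy.1) (fun y hy => hball y hy.2)
        ⟨hcB, hcε⟩ hc
    · filter_upwards [self_mem_nhdsWithin, nhdsWithin_le_nhds (isOpen_ball.mem_nhds ha)]
        with x hxB hxε using h ⟨hxB, hxε⟩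
  filter_upwards [self_mem_nhdsWithin, nhdsWithin_le_nhds (ball_mem_nhds p hε)] with a haQ ha
  exact (iff_eqOn (mem_ball_self hε) hp).trans (iff_eqOn ha haQ).symm

theorem exists_axisCoord_eq_zero [FiniteDimensional ℂ E] (hP : Function.Surjective P)
    (hE : 1 < Module.finrank ℂ E) : ∃ e q : X, ‖P e‖ = 1 ∧ ‖P q‖ = 1 ∧ axisCoord P e q = 0 := by
  let b := stdOrthonormalBasis ℂ E
  obtain ⟨e, he⟩ := hP (b ⟨0, by omega⟩)
  obtain ⟨q, hq⟩ := hP (b ⟨1, hE⟩)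
  refine ⟨e, q, by rw [he, b.norm_eq_one], by rw [hq, b.norm_eq_one], ?_⟩
  simp [axisCoord, he, hq, b.inner_eq_ite]

open Classical in
theorem exists_hartogs_extension [FiniteDimensional ℂ X] [CompleteSpace V]
    (hP : Function.Surjective P) (hE : 1 < Module.finrank ℂ E) {f : X → V}
    (hf : ∀ q ∈ P ⁻¹' sphere 0 1, HolomorphicAt f q) :
    ∃ g : X → V, (∀ x ∈ P ⁻¹' closedBall 0 1, HolomorphicAt g x) ∧
      ∀ q ∈ P ⁻¹' sphere 0 1, g =ᶠ[𝓝 q] f := by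
  have : FiniteDimensional ℂ E := .of_finrank_pos (by omega)
  obtain ⟨e, q₀, he, hq₀, heq₀⟩ := exists_axisCoord_eq_zero hP hE
  have hq₀' : q₀ ∈ P ⁻¹' sphere 0 1 := by simpa using hq₀
  let g := (P ⁻¹' ball 0 1).piecewise (cauchyExtension P e f) f
  have hgf (q : X) (hq : q ∈ P ⁻¹' sphere 0 1) : g =ᶠ[𝓝 q] f := by
    have hev := eventually_eq_nhdsWithin_cylinder hP hE hf
      (fun x hx => holomorphicAt_cauchyExtension he hf hx) hq₀' hq
      (cauchyExtension_eventuallyEq hq₀ heq₀ (hf q₀ hq₀'))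
    filter_upwards [eventually_nhdsWithin_iff.1 hev] with x hx
    by_cases hxB : x ∈ P ⁻¹' ball 0 1
    · exact (piecewise_eq_of_mem _ _ _ hxB).trans (hx hxB)
    · exact piecewise_eq_of_notMem _ _ _ hxB
  refine ⟨g, fun x hx => ?_, hgf⟩
  rcases (mem_closedBall.1 hx).lt_or_eq with hlt | heq
  · refine (holomorphicAt_cauchyExtension he hf hlt).congr ?_
    filter_upwards [(isOpen_ball.preimage P.continuous).mem_nhds hlt] with y hy
    exact (piecewise_eq_of_mem _ _ _ hy).symm
  · exact (hf x heq).congr (hgf x heq).symm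


end Cylinder

/-! ### One-variable boundary estimates -/

theorem norm_one_sub_conj_mul_sq_sub (a z : ℂ) :
    ‖1 - starRingEnd ℂ a * z‖ ^ 2 - ‖z - a‖ ^ 2 = (1 - ‖a‖ ^ 2) * (1 - ‖z‖ ^ 2) := by
  simp only [← normSq_eq_norm_sq, normSq_apply, sub_re, sub_im, mul_re, mul_im, one_re, one_im,
    conj_re, conj_im]
  ring

theorem schwarzPick_zero {u : ℂ → ℂ} (hu : DifferentiableOn ℂ u (ball 0 1))
    (hmaps : MapsTo u (ball 0 1) (ball 0 1)) {τ : ℂ} (hτ : ‖τ‖ < 1) :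
    (1 - ‖τ‖ ^ 2) * ‖1 - starRingEnd ℂ (u 0) * u τ‖ ^ 2 ≤ (1 - ‖u 0‖ ^ 2) * (1 - ‖u τ‖ ^ 2) := by
  have h0 : ‖u 0‖ < 1 := by simpa using hmaps (mem_ball_self one_pos)
  have hu1 {z : ℂ} (hz : z ∈ ball (0 : ℂ) 1) : ‖u z‖ < 1 := by simpa using hmaps hz
  have hden {z : ℂ} (hz : z ∈ ball (0 : ℂ) 1) : 1 - starRingEnd ℂ (u 0) * u z ≠ 0 := by
    intro h
    have : ‖u 0‖ * ‖u z‖ = 1 := by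
      rw [← norm_conj, ← norm_mul, ← sub_eq_zero.1 h, norm_one]
    nlinarith [hu1 hz, norm_nonneg (u 0), norm_nonneg (u z)]
  let w : ℂ → ℂ := fun z => (u z - u 0) / (1 - starRingEnd ℂ (u 0) * u z)
  have hw : DifferentiableOn ℂ w (ball 0 1) :=
    (hu.sub_const _).div ((hu.const_mul _).const_sub _) fun z hz => hden hz
  have hwmaps : MapsTo w (ball 0 1) (closedBall 0 1) := by
    intro z hz
    rw [mem_closedBall_zero_iff, norm_div, div_le_one (norm_pos_iff.2 (hden hz))]
    refine le_of_sq_le_sq ?_ (norm_nonneg _)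
    nlinarith [norm_one_sub_conj_mul_sq_sub (u 0) (u z), hu1 hz, norm_nonneg (u 0),
      norm_nonneg (u z), mul_nonneg (show 0 ≤ 1 - ‖u 0‖ ^ 2 by nlinarith [norm_nonneg (u 0)])
        (show 0 ≤ 1 - ‖u z‖ ^ 2 by nlinarith [norm_nonneg (u z), hu1 hz])]
  have hwτ : ‖u τ - u 0‖ ≤ ‖τ‖ * ‖1 - starRingEnd ℂ (u 0) * u τ‖ := by
    rw [← div_le_iff₀ (norm_pos_iff.2 (hden (mem_ball_zero_iff.2 hτ))), ← norm_div]
    exact norm_le_norm_of_mapsTo_ball hw hwmaps (by simp [w]) hτ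
  nlinarith [norm_one_sub_conj_mul_sq_sub (u 0) (u τ),
    pow_le_pow_left₀ (norm_nonneg _) hwτ 2]

theorem re_deriv_pos_of_mapsTo_ball {u : ℂ → ℂ} {u' : ℂ} (hu : DifferentiableOn ℂ u (ball 0 1))
    (hmaps : MapsTo u (ball 0 1) (ball 0 1)) (h1 : u 1 = 1) (hu' : HasDerivAt u u' 1) :
    0 < u'.re := by
  have h0 : ‖u 0‖ < 1 := by simpa using hmaps (mem_ball_self one_pos)
  have hut : HasDerivAt (fun t : ℝ => u t) u' 1 := by
    rw [← ofReal_one] at hu'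
    exact hu'.comp_ofReal
  have hslope : Tendsto (fun t : ℝ => (1 - ‖u 0‖ ^ 2) * ((‖u t‖ ^ 2 - 1) / (t - 1))) (𝓝[<] 1)
      (𝓝 ((1 - ‖u 0‖ ^ 2) * (2 * u'.re))) := by
    have := hut.norm_sq.tendsto_slope.mono_left (nhdsWithin_mono 1 fun t (ht : t ∈ Iio 1) => ht.ne)
    simpa [slope_fun_def_field, h1] using this.const_mul (1 - ‖u 0‖ ^ 2)
  have hlower : Tendsto (fun t : ℝ => (1 + t) * ‖1 - starRingEnd ℂ (u 0) * u t‖ ^ 2) (𝓝[<] 1)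
      (𝓝 ((1 + 1) * ‖1 - starRingEnd ℂ (u 0) * u (1 : ℝ)‖ ^ 2)) := by
    exact ((continuousAt_const.add continuousAt_id).mul
      ((continuousAt_const.sub
        (continuousAt_const.mul hut.continuousAt)).norm.pow 2)).tendsto.mono_left nhdsWithin_le_nhds
  have hle := le_of_tendsto_of_tendsto hlower hslope <| by
    filter_upwards [Ioo_mem_nhdsLT zero_lt_one] with t ht
    have ht1 : 0 < 1 - t := sub_pos.2 ht.2
    have hnorm : ‖(t : ℂ)‖ = t := by rw [norm_real, Real.norm_of_nonneg ht.1.le]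
    have hpick := schwarzPick_zero hu hmaps (hnorm.trans_lt ht.2)
    rw [hnorm] at hpick
    rw [← neg_div_neg_eq, neg_sub, neg_sub, ← mul_div_assoc, le_div_iff₀ ht1]
    linarith
  have hne : 0 < ‖1 - starRingEnd ℂ (u 0)‖ := by
    rw [norm_pos_iff, sub_ne_zero]
    intro h
    rw [← norm_conj, ← h, norm_one] at h0
    exact lt_irrefl _ h0
  rw [ofReal_one, h1, mul_one] at hle
  have hpos : 0 < (1 - ‖u 0‖ ^ 2) * (2 * u'.re) := by
    linarith [pow_pos hne 2]
  linarith [pos_of_mul_pos_right hpos (by nlinarith [norm_nonneg (u 0)])]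

theorem exists_norm_eq_one_re_le {h : ℂ → ℂ} (hh : DiffContOnCl ℂ h (ball 0 1)) :
    ∃ ζ : ℂ, ‖ζ‖ = 1 ∧ (h ζ).re ≤ (h 0).re := by
  obtain ⟨ζ, hζ, hmax⟩ := exists_mem_frontier_isMaxOn_norm isBounded_ball
    (nonempty_ball.2 one_pos) (differentiable_exp.comp_diffContOnCl hh.neg)
  rw [frontier_ball _ one_ne_zero, mem_sphere_zero_iff_norm] at hζ
  have h0 := hmax (subset_closure (mem_ball_self (x := (0 : ℂ)) one_pos))
  exact ⟨ζ, hζ, by simpa [norm_exp] using h0⟩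

/-! ### Boundary derivative of a map between cylinders and balls -/

section BoundaryDerivative

variable {X E W : Type*} [NormedAddCommGroup X] [NormedSpace ℂ X]
  [NormedAddCommGroup E] [InnerProductSpace ℂ E] [NormedAddCommGroup W] [InnerProductSpace ℂ W]
  {P : X →L[ℂ] E} {F : X → W} {q v : X}

theorem closure_preimage_ball_subset : closure (P ⁻¹' ball 0 1) ⊆ P ⁻¹' closedBall 0 1 :=
  closure_minimal (preimage_mono ball_subset_closedBall)
    (isClosed_closedBall.preimage P.continuous)

theorem diffContOnCl_comp_of_mapsTo {ι : Type*} [NormedAddCommGroup ι] [NormedSpace ℂ ι]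
    {D : Set ι} {φ : ι → X} (hF : ∀ x ∈ P ⁻¹' closedBall 0 1, HolomorphicAt F x)
    (hφ : Differentiable ℂ φ) (hD : MapsTo φ (closure D) (P ⁻¹' closedBall 0 1)) :
    DiffContOnCl ℂ (fun y => F (φ y)) D :=
  DifferentiableOn.diffContOnCl fun y hy =>
    ((hF _ (hD hy)).differentiableAt.comp y (hφ y)).differentiableWithinAt

theorem mapsTo_ball_of_mapsTo_sphere [FiniteDimensional ℂ E] [Nontrivial E]
    (hP : Function.Surjective P) (hF : ∀ x ∈ P ⁻¹' closedBall 0 1, HolomorphicAt F x)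
    (hS : MapsTo F (P ⁻¹' sphere 0 1) (sphere 0 1))
    (hconst : (F '' (P ⁻¹' sphere 0 1)).Nontrivial) :
    MapsTo F (P ⁻¹' ball 0 1) (ball 0 1) := by
  obtain ⟨R, hR⟩ := P.exists_rightInverse_of_surjective (LinearMap.range_eq_top.2 hP)
  have hPR (y : E) : P (R y) = y := DFunLike.congr_fun hR y
  have hle : ∀ x ∈ P ⁻¹' ball 0 1, ‖F x‖ ≤ 1 := by
    intro x hx
    let φ : E → X := fun y => x + R (y - P x)
    have hφ (y : E) : P (φ y) = y := by simp [φ, hPR]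
    have hd : DiffContOnCl ℂ (fun y => F (φ y)) (ball 0 1) :=
      diffContOnCl_comp_of_mapsTo hF (by fun_prop) fun y hy => by
        rw [closure_ball _ one_ne_zero] at hy
        rwa [mem_preimage, hφ]
    have hbound := norm_le_of_forall_mem_frontier_norm_le isBounded_ball hd (C := 1)
      (fun y hy => by
        rw [frontier_ball _ one_ne_zero] at hy
        exact (mem_sphere_zero_iff_norm.1 (hS (by rwa [mem_preimage, hφ]))).le)
      (subset_closure hx)
    simpa [φ] using hbound
  intro x hx
  refine mem_ball_zero_iff.2 ((hle x hx).lt_of_ne fun hFx => ?_)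
  have : UniformConvexSpace W :=
    letI := InnerProductSpace.rclikeToReal ℂ W
    inferInstance
  have hEq : EqOn F (fun _ => F x) (closure (P ⁻¹' ball 0 1)) :=
    eqOn_closure_of_isPreconnected_of_isMaxOn_norm
      ((convex_ball 0 1).linear_preimage (P.restrictScalars ℝ).toLinearMap).isPreconnected
      (isOpen_ball.preimage P.continuous)
      (diffContOnCl_comp_of_mapsTo hF differentiable_id closure_preimage_ball_subset) hx
      fun y hy => (hle y hy).trans_eq hFx.symm
  obtain ⟨_, ⟨q, hq, rfl⟩, _, ⟨q', hq', rfl⟩, hne⟩ := hconst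
  exact hne ((hEq (mem_closure_iff_nhdsWithin_neBot.2 (nhdsWithin_preimage_ball_neBot hq))).trans
    (hEq (mem_closure_iff_nhdsWithin_neBot.2 (nhdsWithin_preimage_ball_neBot hq'))).symm)

theorem re_inner_fderiv_self_pos (hF : ∀ x ∈ P ⁻¹' closedBall 0 1, HolomorphicAt F x)
    (hB : MapsTo F (P ⁻¹' ball 0 1) (ball 0 1)) (hq : q ∈ P ⁻¹' sphere 0 1) (hFq : ‖F q‖ = 1) :
    0 < (inner ℂ (F q) (fderiv ℂ F q q)).re := by
  have hPq : ‖P q‖ = 1 := mem_sphere_zero_iff_norm.1 hq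
  let Λ : W →L[ℂ] ℂ := innerSL ℂ (F q)
  have hball : MapsTo (fun τ : ℂ => τ • q) (ball 0 1) (P ⁻¹' ball 0 1) := fun τ hτ => by
    simpa [norm_smul, hPq] using hτ
  refine re_deriv_pos_of_mapsTo_ball (u := fun τ => Λ (F (τ • q))) (fun τ hτ => ?_)
    (fun τ hτ => ?_) (by simp [Λ, inner_self_eq_norm_sq_to_K, hFq]) ?_
  · have hFτ := (hF _ (preimage_mono ball_subset_closedBall (hball hτ))).differentiableAt
    exact (Λ.differentiableAt.comp τ
      (hFτ.comp τ (by fun_prop : DifferentiableAt ℂ (fun τ : ℂ => τ • q) τ))).differentiableWithinAt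
  · have hFτ : ‖F (τ • q)‖ < 1 := mem_ball_zero_iff.1 (hB (hball hτ))
    refine mem_ball_zero_iff.2 ((norm_inner_le_norm _ _).trans_lt ?_)
    rwa [hFq, one_mul]
  · have hFq' : HasFDerivAt F (fderiv ℂ F q) ((1 : ℂ) • q) := by
      rw [one_smul]
      exact (hF q (preimage_mono sphere_subset_closedBall hq)).differentiableAt.hasFDerivAt
    have hline : HasDerivAt (fun τ : ℂ => τ • q) q 1 := by
      simpa using (hasDerivAt_id (1 : ℂ)).smul_const q
    exact Λ.hasFDerivAt.comp_hasDerivAt _ (hFq'.comp_hasDerivAt _ hline)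

/-- The coefficient of `v` in `boundaryArc P q v t 1`, for `s = ‖P v‖ ^ 2`: if `√s * t` is the
tangent of half an angle, then `√s * arcStep s t` is the sine of that angle. -/
noncomputable def arcStep (s t : ℝ) : ℝ :=
  2 * t / (1 + t ^ 2 * s)

theorem arcStep_sq_add_sq {s : ℝ} (hs : 0 ≤ s) (t : ℝ) :
    (1 - arcStep s t * (t * s)) ^ 2 + arcStep s t ^ 2 * s = 1 := by
  have hden : 1 + t ^ 2 * s ≠ 0 := by positivity
  unfold arcStep
  field_simp
  ring

theorem arcStep_pos {s t : ℝ} (hs : 0 ≤ s) (ht : 0 < t) : 0 < arcStep s t := by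
  unfold arcStep
  positivity

theorem arcStep_le {s t : ℝ} (hs : 0 ≤ s) (ht : 0 ≤ t) : arcStep s t ≤ 2 * t :=
  div_le_self (by positivity) (le_add_of_nonneg_right (by positivity))

theorem tendsto_arcStep {s : ℝ} (hs : 0 ≤ s) : Tendsto (arcStep s) (𝓝[>] 0) (𝓝[>] 0) := by
  refine tendsto_nhdsWithin_iff.2 ⟨?_, eventually_mem_nhdsWithin.mono fun t ht => arcStep_pos hs ht⟩
  have hcont : ContinuousAt (arcStep s) 0 := by
    unfold arcStep
    exact ContinuousAt.div (by fun_prop) (by fun_prop) (by positivity)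
  simpa [arcStep] using hcont.tendsto.mono_left nhdsWithin_le_nhds

/-- The circle `(cos θ) q + (sin θ) ζ v`, in rational parametrisation by a multiple of
`tan (θ / 2)`. It stays in the cylinder boundary when `P v` is orthogonal to `P q` and
`‖ζ‖ = 1`. -/
noncomputable def boundaryArc (P : X →L[ℂ] E) (q v : X) (t : ℝ) (ζ : ℂ) : X :=
  q + (arcStep (‖P v‖ ^ 2) t : ℂ) • (ζ • v - ((t * ‖P v‖ ^ 2 : ℝ) : ℂ) • q)

theorem norm_map_boundaryArc_sq (hPq : ‖P q‖ = 1) (hv : inner ℂ (P q) (P v) = 0) (t : ℝ) (ζ : ℂ) :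
    ‖P (boundaryArc P q v t ζ)‖ ^ 2 =
      1 - arcStep (‖P v‖ ^ 2) t ^ 2 * ‖P v‖ ^ 2 * (1 - ‖ζ‖ ^ 2) := by
  set b := arcStep (‖P v‖ ^ 2) t with hb
  have hdecomp : P (boundaryArc P q v t ζ) =
      ((1 - b * (t * ‖P v‖ ^ 2) : ℝ) : ℂ) • P q + (b * ζ) • P v := by
    simp only [boundaryArc, map_add, map_smul, map_sub, ← hb]
    push_cast
    module
  have horth : inner ℂ (((1 - b * (t * ‖P v‖ ^ 2) : ℝ) : ℂ) • P q) ((b * ζ) • P v) = 0 := by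
    rw [inner_smul_left, inner_smul_right, hv, mul_zero, mul_zero]
  rw [hdecomp, sq, norm_add_sq_eq_norm_sq_add_norm_sq_of_inner_eq_zero _ _ horth, norm_smul,
    norm_smul, norm_mul, norm_real, norm_real, hPq, Real.norm_eq_abs, Real.norm_eq_abs]
  linear_combination sq_abs (1 - b * (t * ‖P v‖ ^ 2)) + ‖ζ‖ ^ 2 * ‖P v‖ ^ 2 * sq_abs b +
    arcStep_sq_add_sq (sq_nonneg ‖P v‖) t

theorem boundaryArc_mem_sphere (hq : q ∈ P ⁻¹' sphere 0 1) (hv : inner ℂ (P q) (P v) = 0) (t : ℝ)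
    {ζ : ℂ} (hζ : ‖ζ‖ = 1) : boundaryArc P q v t ζ ∈ P ⁻¹' sphere 0 1 := by
  have hsq := norm_map_boundaryArc_sq (mem_sphere_zero_iff_norm.1 hq) hv t ζ
  rw [hζ, one_pow, sub_self, mul_zero, sub_zero, pow_eq_one_iff_of_nonneg
    (norm_nonneg _) two_ne_zero] at hsq
  exact mem_sphere_zero_iff_norm.2 hsq

theorem boundaryArc_mem_closedBall (hq : q ∈ P ⁻¹' sphere 0 1) (hv : inner ℂ (P q) (P v) = 0)
    (t : ℝ) {ζ : ℂ} (hζ : ‖ζ‖ ≤ 1) : boundaryArc P q v t ζ ∈ P ⁻¹' closedBall 0 1 := by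
  have hsq := norm_map_boundaryArc_sq (mem_sphere_zero_iff_norm.1 hq) hv t ζ
  have hζ2 : 0 ≤ 1 - ‖ζ‖ ^ 2 := by nlinarith [norm_nonneg ζ]
  rw [mem_preimage, mem_closedBall_zero_iff, ← sq_le_one_iff₀ (norm_nonneg _), hsq, sub_le_self_iff]
  positivity

theorem tendsto_smul_map_add_sub {α : Type*} {l : Filter α} {c : α → ℂ} {d : α → X}
    {F' : X →L[ℂ] W}
    (hF : HasFDerivAt F F' q) (hc : Tendsto (fun n => ‖c n‖) l atTop)
    (hcd : Tendsto (fun n => c n • d n) l (𝓝 v)) :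
    Tendsto (fun n => c n • (F (q + d n) - F q)) l (𝓝 (F' v)) := by
  have hd : Tendsto d l (𝓝 0) := by
    have hinv : Tendsto (fun n => (c n)⁻¹) l (𝓝 0) := by
      rw [tendsto_zero_iff_norm_tendsto_zero]
      exact hc.inv_tendsto_atTop.congr fun n => (norm_inv (c n)).symm
    refine (by simpa using hinv.smul hcd : Tendsto _ l (𝓝 (0 : X))).congr' ?_
    filter_upwards [hc.eventually_gt_atTop 0] with n hn
    rw [inv_smul_smul₀ (norm_pos_iff.1 hn)]
  exact hF.hasFDerivWithinAt.lim hd (.of_forall fun _ => mem_univ _) hcd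

theorem tendsto_smul_map_boundaryArc_sub {F' : X →L[ℂ] W} (hF : HasFDerivAt F F' q) {ζ : ℝ → ℂ}
    (hζ : ∀ t, ‖ζ t‖ = 1) :
    Tendsto (fun t : ℝ => (((arcStep (‖P v‖ ^ 2) t)⁻¹ : ℝ) * (ζ t)⁻¹ : ℂ) •
      (F (boundaryArc P q v t (ζ t)) - F q)) (𝓝[>] 0) (𝓝 (F' v)) := by
  have hs : 0 ≤ ‖P v‖ ^ 2 := sq_nonneg _
  refine tendsto_smul_map_add_sub hF ?_ ?_
  · refine (tendsto_arcStep hs).inv_tendsto_nhdsGT_zero.congr' ?_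
    filter_upwards [self_mem_nhdsWithin] with t ht
    simp [hζ, abs_of_pos (arcStep_pos hs ht)]
  · have hzero : Tendsto (fun t : ℝ => ((t * ‖P v‖ ^ 2 : ℝ) : ℂ) • (ζ t)⁻¹ • q) (𝓝[>] 0) (𝓝 0) := by
      rw [tendsto_zero_iff_norm_tendsto_zero]
      have hcont : Continuous fun t : ℝ => |t * ‖P v‖ ^ 2| * ‖q‖ := by fun_prop
      simpa [norm_smul, hζ] using (hcont.tendsto 0).mono_left nhdsWithin_le_nhds
    have hlim := tendsto_const_nhds (x := v).sub hzero
    rw [sub_zero] at hlim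
    refine hlim.congr' ?_
    filter_upwards [self_mem_nhdsWithin] with t ht
    have hζ0 : ζ t ≠ 0 := norm_ne_zero_iff.1 (by rw [hζ]; exact one_ne_zero)
    have hb0 : (arcStep (‖P v‖ ^ 2) t : ℂ) ≠ 0 := ofReal_ne_zero.2 (arcStep_pos hs ht).ne'
    rw [ofReal_inv, mul_comm _ (ζ t)⁻¹, mul_smul, inv_smul_smul₀ hb0, smul_sub, inv_smul_smul₀ hζ0,
      smul_comm (ζ t)⁻¹]

theorem tendsto_smul_map_boundaryArc_zero_sub {F' : X →L[ℂ] W} (hF : HasFDerivAt F F' q) :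
    Tendsto (fun t : ℝ => (((t * arcStep (‖P v‖ ^ 2) t)⁻¹ : ℝ) : ℂ) •
      (F (boundaryArc P q v t 0) - F q)) (𝓝[>] 0) (𝓝 (F' (-((‖P v‖ ^ 2 : ℝ) : ℂ) • q))) := by
  have hs : 0 ≤ ‖P v‖ ^ 2 := sq_nonneg _
  refine tendsto_smul_map_add_sub hF ?_ (tendsto_const_nhds.congr' ?_)
  · have hpos : Tendsto (fun t : ℝ => t * arcStep (‖P v‖ ^ 2) t) (𝓝[>] 0) (𝓝[>] 0) := by
      refine tendsto_nhdsWithin_iff.2 ⟨?_, eventually_mem_nhdsWithin.mono fun t ht =>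
        mul_pos ht (arcStep_pos hs ht)⟩
      simpa using (tendsto_id.mono_left nhdsWithin_le_nhds).mul
        ((tendsto_arcStep hs).mono_right nhdsWithin_le_nhds)
    refine hpos.inv_tendsto_nhdsGT_zero.congr' ?_
    filter_upwards [self_mem_nhdsWithin] with t ht
    rw [norm_real, Real.norm_of_nonneg (inv_nonneg.2 (mul_pos ht (arcStep_pos hs ht)).le),
      Pi.inv_apply]
  · filter_upwards [self_mem_nhdsWithin] with t ht
    have ht0 : (t : ℂ) ≠ 0 := ofReal_ne_zero.2 (ne_of_gt ht)
    have hb0 : (arcStep (‖P v‖ ^ 2) t : ℂ) ≠ 0 := ofReal_ne_zero.2 (arcStep_pos hs ht).ne'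
    rw [zero_smul, zero_sub, smul_neg, smul_neg, neg_smul, smul_smul, smul_smul]
    congr 2
    push_cast
    field_simp

theorem re_inner_sub_eq_neg_norm_sub_sq {y z : W} (hy : ‖y‖ = 1) (hz : ‖z‖ = 1) :
    (inner ℂ y (z - y)).re = -(‖z - y‖ ^ 2 / 2) := by
  have hsq := norm_sub_sq (𝕜 := ℂ) z y
  rw [inner_sub_right, inner_self_eq_norm_sq_to_K, hy, sub_re]
  rw [hy, hz, ← inner_conj_symm, RCLike.conj_re, RCLike.re_to_complex] at hsq
  norm_num
  linarith

theorem inner_fderiv_eq_zero (hF : DifferentiableAt ℂ F q)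
    (hS : MapsTo F (P ⁻¹' sphere 0 1) (sphere 0 1)) (hq : q ∈ P ⁻¹' sphere 0 1)
    (hv : inner ℂ (P q) (P v) = 0) : inner ℂ (F q) (fderiv ℂ F q v) = 0 := by
  have hFq : ‖F q‖ = 1 := mem_sphere_zero_iff_norm.1 (hS hq)
  have hnonpos {w : X} (hw : inner ℂ (P q) (P w) = 0) :
      (inner ℂ (F q) (fderiv ℂ F q w)).re ≤ 0 := by
    have htendsto := (continuous_re.tendsto _).comp
      (tendsto_const_nhds (x := F q).inner (tendsto_smul_map_boundaryArc_sub (P := P) (v := w)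
        hF.hasFDerivAt (ζ := fun _ => 1) fun _ => norm_one))
    refine le_of_tendsto htendsto ?_
    filter_upwards [self_mem_nhdsWithin] with t ht
    have hFt := mem_sphere_zero_iff_norm.1 (hS (boundaryArc_mem_sphere hq hw t norm_one))
    have hb := arcStep_pos (sq_nonneg ‖P w‖) ht
    rw [Function.comp_apply, inner_smul_right, inv_one, mul_one, re_ofReal_mul,
      re_inner_sub_eq_neg_norm_sub_sq hFq hFt]
    exact mul_nonpos_of_nonneg_of_nonpos (inv_nonneg.2 hb.le)
      (neg_nonpos.2 (div_nonneg (sq_nonneg _) zero_le_two))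
  have hzero {w : X} (hw : inner ℂ (P q) (P w) = 0) :
      (inner ℂ (F q) (fderiv ℂ F q w)).re = 0 := by
    have hneg := hnonpos (w := -w) (by rw [map_neg, inner_neg_right, hw, neg_zero])
    rw [map_neg, inner_neg_right, neg_re] at hneg
    linarith [hnonpos hw]
  have hI := hzero (w := I • v) (by rw [map_smul, inner_smul_right, hv, mul_zero])
  rw [map_smul, inner_smul_right, I_mul_re, neg_eq_zero] at hI
  exact Complex.ext (hzero hv) hI

-- Since `F` maps the circle into the unit sphere, `Re ⟨F q, F · - F q⟩` measures on it the distance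
-- to `F q`; its minimum on the circle is at most its value at the centre `boundaryArc P q v t 0`.
theorem exists_norm_sub_boundaryArc_le (hF : ∀ x ∈ P ⁻¹' closedBall 0 1, HolomorphicAt F x)
    (hS : MapsTo F (P ⁻¹' sphere 0 1) (sphere 0 1)) (hq : q ∈ P ⁻¹' sphere 0 1)
    (hv : inner ℂ (P q) (P v) = 0) (t : ℝ) :
    ∃ ζ : ℂ, ‖ζ‖ = 1 ∧ -(inner ℂ (F q) (F (boundaryArc P q v t 0) - F q)).re ≤
      ‖F (boundaryArc P q v t ζ) - F q‖ ^ 2 / 2 := by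
  have hd : DiffContOnCl ℂ (fun ζ : ℂ => F (boundaryArc P q v t ζ)) (ball 0 1) :=
    diffContOnCl_comp_of_mapsTo hF (by unfold boundaryArc; fun_prop) fun ζ hζ => by
      rw [closure_ball _ one_ne_zero] at hζ
      exact boundaryArc_mem_closedBall hq hv t (mem_closedBall_zero_iff.1 hζ)
  obtain ⟨ζ, hζ, hle⟩ := exists_norm_eq_one_re_le
    ((innerSL ℂ (F q)).differentiable.comp_diffContOnCl (hd.sub_const (F q)))
  refine ⟨ζ, hζ, ?_⟩
  rw [← neg_le_neg_iff, neg_neg, ← re_inner_sub_eq_neg_norm_sub_sq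
    (mem_sphere_zero_iff_norm.1 (hS hq))
    (mem_sphere_zero_iff_norm.1 (hS (boundaryArc_mem_sphere hq hv t hζ)))]
  exact hle

theorem re_inner_fderiv_self_mul_norm_sq_le
    (hF : ∀ x ∈ P ⁻¹' closedBall 0 1, HolomorphicAt F x)
    (hS : MapsTo F (P ⁻¹' sphere 0 1) (sphere 0 1)) (hq : q ∈ P ⁻¹' sphere 0 1)
    (hv : inner ℂ (P q) (P v) = 0) :
    (inner ℂ (F q) (fderiv ℂ F q q)).re * ‖P v‖ ^ 2 ≤ ‖fderiv ℂ F q v‖ ^ 2 := by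
  have hF' := (hF q (preimage_mono sphere_subset_closedBall hq)).differentiableAt.hasFDerivAt
  choose ζ hζ hle using exists_norm_sub_boundaryArc_le hF hS hq hv
  have hcentre := ((continuous_re.tendsto _).comp (tendsto_const_nhds (x := F q).inner
    (tendsto_smul_map_boundaryArc_zero_sub (P := P) (v := v) hF'))).neg
  have hcircle := (tendsto_smul_map_boundaryArc_sub (P := P) (v := v) hF' hζ).norm.pow 2
  have hlim := le_of_tendsto_of_tendsto hcentre hcircle <| by
    filter_upwards [self_mem_nhdsWithin] with t ht
    have ht0 : 0 < t := ht
    have hb := arcStep_pos (sq_nonneg ‖P v‖) ht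
    rw [Function.comp_apply, inner_smul_right, re_ofReal_mul, norm_smul, norm_mul, norm_inv,
      hζ, inv_one, mul_one, norm_real, Real.norm_of_nonneg (inv_nonneg.2 hb.le), mul_pow, ← mul_neg]
    calc _ ≤ (t * arcStep (‖P v‖ ^ 2) t)⁻¹ * (‖F (boundaryArc P q v t (ζ t)) - F q‖ ^ 2 / 2) :=
          mul_le_mul_of_nonneg_left (hle t) (by positivity)
      _ = (2 * t * arcStep (‖P v‖ ^ 2) t)⁻¹ * ‖F (boundaryArc P q v t (ζ t)) - F q‖ ^ 2 := by
          field_simp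
      _ ≤ (arcStep (‖P v‖ ^ 2) t)⁻¹ ^ 2 * ‖F (boundaryArc P q v t (ζ t)) - F q‖ ^ 2 := by
          rw [inv_pow, sq (arcStep _ _)]
          gcongr
          exact arcStep_le (sq_nonneg _) ht0.le
  rw [map_smul, inner_smul_right, ← ofReal_neg, re_ofReal_mul] at hlim
  linarith

theorem map_eq_zero_of_fderiv_eq_zero (hF : ∀ x ∈ P ⁻¹' closedBall 0 1, HolomorphicAt F x)
    (hB : MapsTo F (P ⁻¹' ball 0 1) (ball 0 1)) (hS : MapsTo F (P ⁻¹' sphere 0 1) (sphere 0 1))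
    (hq : q ∈ P ⁻¹' sphere 0 1) (hv : fderiv ℂ F q v = 0) : P v = 0 := by
  have hd := (hF q (preimage_mono sphere_subset_closedBall hq)).differentiableAt
  have hpos := re_inner_fderiv_self_pos hF hB hq (mem_sphere_zero_iff_norm.1 (hS hq))
  have hPq : ‖P q‖ = 1 := mem_sphere_zero_iff_norm.1 hq
  set α := inner ℂ (P q) (P v) with hα
  have horth : inner ℂ (P q) (P (v - α • q)) = 0 := by
    simp [hPq, ← hα]
  have hα0 : α = 0 := by
    have htang := inner_fderiv_eq_zero hd hS hq horth
    rw [map_sub, map_smul, hv, zero_sub, inner_neg_right, inner_smul_right, neg_eq_zero] at htang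
    refine (mul_eq_zero.1 htang).resolve_right fun h => ?_
    rw [h, zero_re] at hpos
    exact lt_irrefl _ hpos
  have hlevi := re_inner_fderiv_self_mul_norm_sq_le hF hS hq (hα.symm.trans hα0)
  rw [hv, norm_zero, zero_pow two_ne_zero] at hlevi
  have : ‖P v‖ ^ 2 ≤ 0 := nonpos_of_mul_nonpos_right hlevi hpos
  exact norm_eq_zero.1 (pow_eq_zero_iff two_ne_zero |>.1 (le_antisymm this (sq_nonneg _)))

theorem eventually_one_lt_norm {F' : X →L[ℂ] W} (hF : HasStrictFDerivAt F F' q)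
    (hS : MapsTo F (P ⁻¹' sphere 0 1) (sphere 0 1)) (hq : q ∈ P ⁻¹' sphere 0 1)
    (hpos : 0 < (inner ℂ (F q) (F' q)).re) : ∀ᶠ x in 𝓝 q, 1 < ‖P x‖ → 1 < ‖F x‖ := by
  have hPq : ‖P q‖ = 1 := mem_sphere_zero_iff_norm.1 hq
  let c : X → X := fun x => ((‖P x‖⁻¹ : ℝ) : ℂ) • x
  have hcq : c q = q := by simp [c, hPq]
  have hc : ContinuousAt c q := by
    have hinv : ContinuousAt (fun x => ‖P x‖⁻¹) q :=
      ContinuousAt.inv₀ (by fun_prop) (by rw [hPq]; exact one_ne_zero)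
    exact (continuous_ofReal.continuousAt.comp hinv).smul continuousAt_id
  obtain ⟨κ, hκ0, hκ⟩ : ∃ κ : ℝ, 0 < κ ∧ κ * ‖q‖ < (inner ℂ (F q) (F' q)).re :=
    exists_pos_mul_lt hpos ‖q‖ |>.imp fun κ h => ⟨h.1, by rw [mul_comm]; exact h.2⟩
  have hpair : Tendsto (fun x => (x, c x)) (𝓝 q) (𝓝 (q, q)) := by
    simpa only [hcq, id] using (continuousAt_id.prodMk hc).tendsto
  have hderiv : ∀ᶠ x in 𝓝 q, κ * ‖x‖ < (inner ℂ (F (c x)) (F' x)).re := by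
    have hFc : ContinuousAt (fun x => F (c x)) q :=
      ContinuousAt.comp (g := F) (by rw [hcq]; exact hF.continuousAt) hc
    refine ContinuousAt.eventually_lt (by fun_prop)
      (continuous_re.continuousAt.comp (hFc.inner F'.continuous.continuousAt)) ?_
    simpa only [Function.comp_apply, hcq] using hκ
  filter_upwards [hpair.eventually (hF.isLittleO.bound hκ0), hderiv] with x hrem hx hPx
  have hcx : ‖F (c x)‖ = 1 := mem_sphere_zero_iff_norm.1 <| hS <| mem_sphere_zero_iff_norm.2 <| by
    rw [map_smul, norm_smul, norm_real, norm_inv, norm_norm,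
      inv_mul_cancel₀ (zero_lt_one.trans hPx).ne']
  set δ : ℝ := 1 - ‖P x‖⁻¹ with hδ
  have hδ0 : 0 < δ := sub_pos.2 (inv_lt_one_of_one_lt₀ hPx)
  have hxc : x - c x = (δ : ℂ) • x := by
    rw [hδ, ofReal_sub, sub_smul, ofReal_one, one_smul]
  rw [hxc, map_smul, norm_smul, norm_real, Real.norm_of_nonneg hδ0.le] at hrem
  have hle (z : W) : ‖(inner ℂ (F (c x)) z)‖ ≤ ‖z‖ := by
    simpa [hcx] using norm_inner_le_norm (𝕜 := ℂ) (F (c x)) z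
  have hexpand : (inner ℂ (F (c x)) (F x)).re = 1 + δ * (inner ℂ (F (c x)) (F' x)).re +
      (inner ℂ (F (c x)) (F x - F (c x) - (δ : ℂ) • F' x)).re := by
    rw [inner_sub_right, inner_sub_right, inner_smul_right, sub_re, sub_re, re_ofReal_mul,
      inner_self_eq_norm_sq_to_K, hcx]
    norm_num
  calc 1 < 1 + δ * ((inner ℂ (F (c x)) (F' x)).re - κ * ‖x‖) :=
        lt_add_of_pos_right _ (mul_pos hδ0 (sub_pos.2 hx))
    _ ≤ (inner ℂ (F (c x)) (F x)).re := by
        have := (neg_le_of_abs_le ((abs_re_le_norm _).trans (hle _))).trans' (neg_le_neg hrem)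
        linarith
    _ ≤ ‖F x‖ := (re_le_norm _).trans (hle _)

end BoundaryDerivative

/-! ### Automorphisms of the boundary cylinder -/

section Gluing

variable {X V : Type*} [NormedAddCommGroup X] [NormedSpace ℂ X]
  [NormedAddCommGroup V] [NormedSpace ℂ V]

-- If the germ of `ψ y` is compatible with the germs of `ψ y'` for `y'` within distance `δ y`, then
-- on the overlap of two balls of a third of these radii the centre of the ball with the smaller
-- radius is such a `y'`, and the identity theorem applies.
theorem exists_eventuallyEq_of_compatible_germs [CompleteSpace V] {S : Set X} {ψ : X → X → V}
    (hψ : ∀ y ∈ S, HolomorphicAt (ψ y) y)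
    (hcompat : ∀ y ∈ S, ∀ᶠ y' in 𝓝[S] y, ψ y =ᶠ[𝓝 y'] ψ y') :
    ∃ h : X → V, ∀ y ∈ S, h =ᶠ[𝓝 y] ψ y := by
  have hδ (y : S) : ∃ δ > 0, ∀ z ∈ ball (y : X) δ,
      HolomorphicAt (ψ y) z ∧ (z ∈ S → ψ y =ᶠ[𝓝 z] ψ z) :=
    Metric.eventually_nhds_iff_ball.1 <|
      (hψ y y.2).eventually.and (eventually_nhdsWithin_iff.1 (hcompat y y.2))
  choose δ hδ0 hδ using hδ
  have heq {y y' : S} {x : X} (hle : δ y' ≤ δ y) (hx : dist x y < δ y / 3)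
      (hx' : dist x y' < δ y' / 3) : ψ y x = ψ y' x := by
    have hy' : (y' : X) ∈ ball (y : X) (δ y) := by
      have := dist_triangle_left (y' : X) y x
      rw [mem_ball]
      linarith [hδ0 y]
    refine HolomorphicAt.eqOn_of_convex (isOpen_ball.inter isOpen_ball)
      ((convex_ball (y : X) (δ y)).inter (convex_ball (y' : X) (δ y')))
      (fun z hz => (hδ y z hz.1).1) (fun z hz => (hδ y' z hz.2).1)
      ⟨hy', mem_ball_self (hδ0 y')⟩ ((hδ y _ hy').2 y'.2) ⟨?_, ?_⟩
    · exact hx.trans (by linarith [hδ0 y])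
    · exact hx'.trans (by linarith [hδ0 y'])
  have hchoice (x : X) : ∃ c, ∀ y : S, dist x y < δ y / 3 → c = ψ y x := by
    by_cases hx : ∃ y : S, dist x y < δ y / 3
    · obtain ⟨y, hy⟩ := hx
      refine ⟨ψ y x, fun y' hy' => ?_⟩
      rcases le_total (δ y') (δ y) with hle | hle
      · exact heq hle hy hy'
      · exact (heq hle hy' hy).symm
    · exact ⟨0, fun y hy => (hx ⟨y, hy⟩).elim⟩
  choose h hh using hchoice
  refine ⟨h, fun y hy => ?_⟩
  filter_upwards [ball_mem_nhds y (div_pos (hδ0 ⟨y, hy⟩) three_pos)] with x hx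
  exact hh x ⟨y, hy⟩ hx

theorem exists_holomorphic_inverse_of_bijOn [CompleteSpace X] {f : X → X} {S T : Set X}
    (hbij : BijOn f S T) (hf : ∀ q ∈ S, ContinuousAt f q)
    (hloc : ∀ q ∈ S, ∃ ψ : X → X, HolomorphicAt ψ (f q) ∧ (∀ᶠ x in 𝓝 q, ψ (f x) = x) ∧
      (∀ᶠ y in 𝓝 (f q), f (ψ y) = y) ∧ ∀ᶠ y in 𝓝 (f q), y ∈ T → ψ y ∈ S) :
    ∃ h : X → X, (∀ y ∈ T, HolomorphicAt h y) ∧ (∀ q ∈ S, ∀ᶠ x in 𝓝 q, h (f x) = x) ∧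
      ∀ y ∈ T, ∀ᶠ z in 𝓝 y, f (h z) = z := by
  have hloc' (y : X) : ∃ ψ : X → X, ∀ q ∈ S, f q = y →
      HolomorphicAt ψ y ∧ (∀ᶠ x in 𝓝 q, ψ (f x) = x) ∧
      (∀ᶠ z in 𝓝 y, f (ψ z) = z) ∧ ∀ᶠ z in 𝓝 y, z ∈ T → ψ z ∈ S := by
    by_cases hy : y ∈ T
    · obtain ⟨q, hq, rfl⟩ := hbij.surjOn hy
      obtain ⟨ψ, hψ⟩ := hloc q hq
      exact ⟨ψ, fun q' hq' heq => by rwa [hbij.injOn hq' hq heq]⟩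
    · exact ⟨id, fun q hq heq => (hy (heq ▸ hbij.mapsTo hq)).elim⟩
  choose ψ hψ using hloc'
  have hcompat : ∀ y ∈ T, ∀ᶠ y' in 𝓝[T] y, ψ y =ᶠ[𝓝 y'] ψ y' := by
    intro y hy
    obtain ⟨q, hq, hqy⟩ := hbij.surjOn hy
    obtain ⟨hol, -, hright, hmem⟩ := hψ y q hq hqy
    refine eventually_nhdsWithin_iff.2 ?_
    filter_upwards [hol.eventually, eventually_eventually_nhds.2 hright, hmem]
      with y' hol' hright' hmem' hy'
    obtain ⟨-, hleft, -⟩ := hψ y' (ψ y y') (hmem' hy') hright'.self_of_nhds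
    filter_upwards [hright', hol'.continuousAt.eventually hleft] with z hz hz'
    rw [← hz', hz]
  have hhol : ∀ y ∈ T, HolomorphicAt (ψ y) y := by
    intro y hy
    obtain ⟨q, hq, hqy⟩ := hbij.surjOn hy
    exact (hψ y q hq hqy).1
  obtain ⟨h, hh⟩ := exists_eventuallyEq_of_compatible_germs hhol hcompat
  refine ⟨h, fun y hy => (hhol y hy).congr (hh y hy).symm, fun q hq => ?_, fun y hy => ?_⟩
  · filter_upwards [(hψ (f q) q hq rfl).2.1, (hf q hq).eventually (hh (f q) (hbij.mapsTo hq))]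
      with x hx hx'
    rw [hx', hx]
  · obtain ⟨q, hq, hqy⟩ := hbij.surjOn hy
    filter_upwards [(hψ y q hq hqy).2.2.1, hh y hy] with z hz hz'
    rw [hz', hz]

end Gluing

section Automorphism

variable {X E W : Type*} [NormedAddCommGroup X] [NormedSpace ℂ X]
  [NormedAddCommGroup E] [InnerProductSpace ℂ E]
  [NormedAddCommGroup W] [InnerProductSpace ℂ W] {P : X →L[ℂ] E}

theorem apply_add_of_map_eq_zero {F : X → W} (hF : ∀ x ∈ P ⁻¹' sphere 0 1, HolomorphicAt F x)
    (hS : MapsTo F (P ⁻¹' sphere 0 1) (sphere 0 1)) {q k : X} (hq : q ∈ P ⁻¹' sphere 0 1)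
    (hk : P k = 0) : F (q + k) = F q := by
  have hline (t : ℂ) : q + t • k ∈ P ⁻¹' sphere 0 1 := by
    simpa only [mem_preimage, map_add, map_smul, hk, smul_zero, add_zero] using hq
  have hdiff : Differentiable ℂ fun t : ℂ => F (q + t • k) := fun t =>
    DifferentiableAt.comp (g := F) t (hF _ (hline t)).differentiableAt (by fun_prop)
  have hbdd : Bornology.IsBounded (range fun t : ℂ => F (q + t • k)) :=
    isBounded_sphere.subset (range_subset_iff.2 fun t => hS (hline t))
  simpa only [one_smul, zero_smul, add_zero] using hdiff.apply_eq_apply_of_bounded hbdd 1 0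

variable [FiniteDimensional ℂ X]

theorem eventually_mem_sphere_of_apply_mem_sphere {F : X → W} {q : X}
    (hF : ∀ x ∈ P ⁻¹' closedBall 0 1, HolomorphicAt F x)
    (hB : MapsTo F (P ⁻¹' ball 0 1) (ball 0 1))
    (hS : MapsTo F (P ⁻¹' sphere 0 1) (sphere 0 1)) (hq : q ∈ P ⁻¹' sphere 0 1) :
    ∀ᶠ x in 𝓝 q, F x ∈ sphere 0 1 → x ∈ P ⁻¹' sphere 0 1 := by
  have hpos := re_inner_fderiv_self_pos hF hB hq (mem_sphere_zero_iff_norm.1 (hS hq))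
  have hstrict := (hF q (sphere_subset_closedBall hq)).hasStrictFDerivAt
  filter_upwards [eventually_one_lt_norm hstrict hS hq hpos] with x hx hFx
  rw [mem_sphere_zero_iff_norm] at hFx
  refine mem_sphere_zero_iff_norm.2 (le_antisymm ?_ ?_)
  · exact not_lt.1 fun h => (hx h).ne' hFx
  · exact not_lt.1 fun h => (mem_ball_zero_iff.1 (hB (mem_ball_zero_iff.2 h))).ne hFx

variable {f g h : X → X} {q : X}

-- On the affine fibre through `q` the map `P ∘ g` is constant, so that the component of `g` along
-- `ker P` is an injective holomorphic self-map of `ker P`.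
theorem eq_zero_of_fderiv_eq_zero_of_map_eq_zero (hP : Function.Surjective P)
    (hg : ∀ x ∈ P ⁻¹' sphere 0 1, HolomorphicAt g x)
    (hS : MapsTo g (P ⁻¹' sphere 0 1) (P ⁻¹' sphere 0 1)) (hinj : InjOn g (P ⁻¹' sphere 0 1))
    (hq : q ∈ P ⁻¹' sphere 0 1) {v : X} (hv : P v = 0) (hgv : fderiv ℂ g q v = 0) : v = 0 := by
  have : FiniteDimensional ℂ E := .of_surjective P.toLinearMap hP
  obtain ⟨R, hR⟩ := P.exists_rightInverse_of_surjective (LinearMap.range_eq_top.2 hP)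
  let K := LinearMap.ker P.toLinearMap
  let π : X →L[ℂ] K := P.projKerOfRightInverse R (DFunLike.congr_fun hR)
  have hfibre (k : K) : q + k ∈ P ⁻¹' sphere 0 1 := by
    rw [mem_preimage, map_add, show P k = 0 from k.2, add_zero]
    exact hq
  have htranslate : Differentiable ℂ fun k : K => q + (k : X) :=
    K.subtypeL.differentiable.const_add q
  have hgfibre (k : K) : HolomorphicAt (fun k : K => g (q + k)) k :=
    .comp (f := g) (hg _ (hfibre k)) (.of_differentiable htranslate)
  have hinjective : Function.Injective fun k : K => π (g (q + k)) := by
    intro k k' hkk'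
    have hPg (k : K) : P (g (q + k)) = P (g q) :=
      apply_add_of_map_eq_zero (F := P ∘ g)
        (fun x hx => (hg x hx).clm_comp P) hS hq k.2
    have hcoe : g (q + k) - R (P (g (q + k))) = g (q + k') - R (P (g (q + k'))) :=
      congrArg Subtype.val hkk'
    rw [hPg, hPg, sub_left_inj] at hcoe
    exact Subtype.ext (add_left_cancel (hinj (hfibre k) (hfibre k') hcoe))
  have hderiv : HasFDerivAt (fun k : K => π (g (q + k))) (π ∘L fderiv ℂ g q ∘L K.subtypeL) 0 := by
    have hgq : HasFDerivAt g (fderiv ℂ g q) (q + (0 : K)) := by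
      simpa only [ZeroMemClass.coe_zero, add_zero] using (hg q hq).differentiableAt.hasFDerivAt
    exact π.hasFDerivAt.comp 0 (hgq.comp (0 : K) (K.subtypeL.hasFDerivAt.const_add q))
  have hker := HolomorphicAt.fderiv_injective_of_locallyInjectiveAt
    ((hgfibre 0).clm_comp π) (.of_injective hinjective 0)
  rw [HasFDerivAt.fderiv (f := π ∘ fun k : K => g (q + k)) hderiv,
    injective_iff_map_eq_zero] at hker
  exact congrArg Subtype.val (hker ⟨v, hv⟩ (by simp [hgv]))

theorem fderiv_injective_of_mapsTo_ball (hP : Function.Surjective P)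
    (hg : ∀ x ∈ P ⁻¹' closedBall 0 1, HolomorphicAt g x)
    (hB : MapsTo g (P ⁻¹' ball 0 1) (P ⁻¹' ball 0 1))
    (hS : MapsTo g (P ⁻¹' sphere 0 1) (P ⁻¹' sphere 0 1)) (hinj : InjOn g (P ⁻¹' sphere 0 1))
    (hq : q ∈ P ⁻¹' sphere 0 1) : Function.Injective (fderiv ℂ g q) := by
  refine (injective_iff_map_eq_zero _).2 fun v hv => ?_
  refine eq_zero_of_fderiv_eq_zero_of_map_eq_zero hP
    (fun x hx => hg x (sphere_subset_closedBall hx)) hS hinj hq ?_ hv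
  refine map_eq_zero_of_fderiv_eq_zero (F := P ∘ g)
    (fun x hx => (hg x hx).clm_comp P) hB hS hq ?_
  rw [fderiv_comp q P.differentiableAt (hg q (sphere_subset_closedBall hq)).differentiableAt,
    P.fderiv, ContinuousLinearMap.comp_apply, hv, map_zero]

theorem exists_holomorphic_inverse_of_mapsTo_ball (hP : Function.Surjective P)
    (hg : ∀ x ∈ P ⁻¹' closedBall 0 1, HolomorphicAt g x)
    (hB : MapsTo g (P ⁻¹' ball 0 1) (P ⁻¹' ball 0 1))
    (hbij : BijOn g (P ⁻¹' sphere 0 1) (P ⁻¹' sphere 0 1)) :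
    ∃ h : X → X, (∀ y ∈ P ⁻¹' sphere 0 1, HolomorphicAt h y) ∧
      (∀ q ∈ P ⁻¹' sphere 0 1, ∀ᶠ x in 𝓝 q, h (g x) = x) ∧
      ∀ y ∈ P ⁻¹' sphere 0 1, ∀ᶠ z in 𝓝 y, g (h z) = z := by
  have : CompleteSpace X := FiniteDimensional.complete ℂ X
  have hol {q : X} (hq : q ∈ P ⁻¹' sphere 0 1) := hg q (sphere_subset_closedBall hq)
  refine exists_holomorphic_inverse_of_bijOn hbij (fun q hq => (hol hq).continuousAt)
    fun q hq => ?_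
  obtain ⟨ψ, hψ, hleft, hright⟩ := (hol hq).exists_localInverse
    (fderiv_injective_of_mapsTo_ball hP hg hB hbij.mapsTo hbij.injOn hq)
  refine ⟨ψ, hψ, hleft, hright, ?_⟩
  have htend : Tendsto ψ (𝓝 (g q)) (𝓝 q) := by
    simpa only [hleft.self_of_nhds] using hψ.continuousAt.tendsto
  have hmem := eventually_mem_sphere_of_apply_mem_sphere (F := P ∘ g)
    (fun x hx => (hg x hx).clm_comp P) hB hbij.mapsTo hq
  filter_upwards [hright, htend.eventually hmem] with y hy hψy hyS
  exact hψy (by rwa [Function.comp_apply, hy])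

theorem mapsTo_ball_of_bijOn_sphere [Nontrivial E] (hP : Function.Surjective P)
    (hg : ∀ x ∈ P ⁻¹' closedBall 0 1, HolomorphicAt g x)
    (hbij : BijOn g (P ⁻¹' sphere 0 1) (P ⁻¹' sphere 0 1)) :
    MapsTo g (P ⁻¹' ball 0 1) (P ⁻¹' ball 0 1) := by
  have : FiniteDimensional ℂ E := .of_surjective P.toLinearMap hP
  refine mapsTo_ball_of_mapsTo_sphere (F := P ∘ g) hP
    (fun x hx => (hg x hx).clm_comp P) hbij.mapsTo ?_
  obtain ⟨e, he⟩ := exists_norm_eq E zero_le_one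
  rw [image_comp, hbij.image_eq, image_preimage_eq _ hP]
  refine ⟨e, mem_sphere_zero_iff_norm.2 he, -e, by rwa [mem_sphere_zero_iff_norm, norm_neg], ?_⟩
  have : IsAddTorsionFree E := .of_isTorsionFree ℂ E
  exact self_ne_neg.2 (norm_ne_zero_iff.1 (he ▸ one_ne_zero))

theorem leftInvOn_ball_of_eventually (hg : ∀ x ∈ P ⁻¹' ball 0 1, HolomorphicAt g x)
    (hh : ∀ x ∈ P ⁻¹' ball 0 1, HolomorphicAt h x)
    (hB : MapsTo g (P ⁻¹' ball 0 1) (P ⁻¹' ball 0 1)) (hq : q ∈ P ⁻¹' sphere 0 1)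
    (hhg : ∀ᶠ x in 𝓝 q, h (g x) = x) : LeftInvOn h g (P ⁻¹' ball 0 1) := by
  have : CompleteSpace X := FiniteDimensional.complete ℂ X
  have := nhdsWithin_preimage_ball_neBot hq
  obtain ⟨x, hx, hxB⟩ := ((eventually_eventually_nhds.2 hhg).filter_mono
    nhdsWithin_le_nhds |>.and (eventually_mem_nhdsWithin (s := P ⁻¹' ball 0 1))).exists
  exact HolomorphicAt.eqOn_of_convex (f := h ∘ g) (g := id) (isOpen_ball.preimage P.continuous)
    ((convex_ball 0 1).linear_preimage (P.restrictScalars ℝ).toLinearMap)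
    (fun y hy => .comp (f := h) (hh _ (hB hy)) (hg y hy))
    (fun y _ => .of_differentiable differentiable_id)
    hxB hx

theorem bijOn_ball_of_bijOn_sphere (hP : Function.Surjective P) (hE : 1 < Module.finrank ℂ E)
    (hg : ∀ x ∈ P ⁻¹' closedBall 0 1, HolomorphicAt g x)
    (hbij : BijOn g (P ⁻¹' sphere 0 1) (P ⁻¹' sphere 0 1)) :
    BijOn g (P ⁻¹' ball 0 1) (P ⁻¹' ball 0 1) := by
  have : CompleteSpace X := FiniteDimensional.complete ℂ X
  have : Nontrivial E := Module.nontrivial_of_finrank_pos (R := ℂ) (by omega)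
  have hB := mapsTo_ball_of_bijOn_sphere hP hg hbij
  obtain ⟨h₀, hh₀, hleft, hright⟩ := exists_holomorphic_inverse_of_mapsTo_ball hP hg hB hbij
  obtain ⟨h, hh, hhh₀⟩ := exists_hartogs_extension hP hE hh₀
  have hhg : ∀ q ∈ P ⁻¹' sphere 0 1, ∀ᶠ x in 𝓝 q, h (g x) = x := fun q hq => by
    have hgq := (hg q (sphere_subset_closedBall hq)).continuousAt
    filter_upwards [hleft q hq, hgq.eventually (hhh₀ _ (hbij.mapsTo hq))] with x hx hx'
    rw [hx', hx]
  have hgh : ∀ q ∈ P ⁻¹' sphere 0 1, ∀ᶠ x in 𝓝 q, g (h x) = x := fun q hq => by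
    filter_upwards [hright q hq, hhh₀ q hq] with x hx hx'
    rw [hx', hx]
  have hhbij : BijOn h (P ⁻¹' sphere 0 1) (P ⁻¹' sphere 0 1) :=
    hbij.symm ⟨fun q hq => (hgh q hq).self_of_nhds, fun q hq => (hhg q hq).self_of_nhds⟩
  have hhB := mapsTo_ball_of_bijOn_sphere hP hh hhbij
  have hgball := fun x hx => hg x (preimage_mono ball_subset_closedBall hx)
  have hhball := fun x hx => hh x (preimage_mono ball_subset_closedBall hx)
  obtain ⟨e, he⟩ := exists_norm_eq E zero_le_one
  obtain ⟨q, rfl⟩ := hP e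
  have hq : q ∈ P ⁻¹' sphere 0 1 := mem_sphere_zero_iff_norm.2 he
  exact InvOn.bijOn ⟨leftInvOn_ball_of_eventually hgball hhball hB hq (hhg q hq),
    leftInvOn_ball_of_eventually hhball hgball hhB hq (hgh q hq)⟩ hB hhB

theorem stmt16_general (hP : Function.Surjective P) (hE : 1 < Module.finrank ℂ E) {U : Set X}
    (hU : IsOpen U) (hQU : P ⁻¹' sphere 0 1 ⊆ U) (hf : DifferentiableOn ℂ f U)
    (hbij : BijOn f (P ⁻¹' sphere 0 1) (P ⁻¹' sphere 0 1)) :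
    ∃ (g : X → X) (U' : Set X), IsOpen U' ∧ P ⁻¹' sphere 0 1 ⊆ U' ∧ U' ⊆ U ∧
      DifferentiableOn ℂ g (P ⁻¹' ball 0 1) ∧ BijOn g (P ⁻¹' ball 0 1) (P ⁻¹' ball 0 1) ∧
      EqOn g f (P ⁻¹' ball 0 1 ∩ U') := by
  have : CompleteSpace X := FiniteDimensional.complete ℂ X
  obtain ⟨g, hg, hgf⟩ := exists_hartogs_extension (f := f) hP hE fun q hq =>
    hf.eventually_differentiableAt (hU.mem_nhds (hQU hq))
  have hgbij : BijOn g (P ⁻¹' sphere 0 1) (P ⁻¹' sphere 0 1) :=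
    hbij.congr fun q hq => (hgf q hq).self_of_nhds.symm
  refine ⟨g, U ∩ {x | g =ᶠ[𝓝 x] f}, hU.inter isOpen_setOfPred_eventually_nhds,
    fun q hq => ⟨hQU hq, hgf q hq⟩, inter_subset_left, fun x hx => ?_,
    bijOn_ball_of_bijOn_sphere hP hE hg hgbij, fun x hx => ?_⟩
  · exact (hg x (ball_subset_closedBall hx)).differentiableAt.differentiableWithinAt
  · exact hx.2.2.self_of_nhds

end Automorphism

section Coordinates

/-- The coordinates of `ℂⁿ × ℂ` in which `𝒬` and `ℬ` are the unit sphere and the unit ball: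
`z_j` with `j < m`, indexed by `some j`, and `w`, indexed by `none`. -/
noncomputable def sphereCoordinates (n m : ℕ) :
    ((Fin n → ℂ) × ℂ) →L[ℂ] EuclideanSpace ℂ (Option {j : Fin n // (j : ℕ) < m}) :=
  LinearMap.toContinuousLinearMap
    { toFun p := WithLp.toLp 2 fun o => o.elim p.2 fun j => p.1 j
      map_add' p p' := by
        ext o
        cases o <;> rfl
      map_smul' c p := by
        ext o
        cases o <;> rfl }

theorem sphereCoordinates_surjective (n m : ℕ) : Function.Surjective (sphereCoordinates n m) := by
  intro y
  refine ⟨(fun j => if h : (j : ℕ) < m then y (some ⟨j, h⟩) else 0, y none), ?_⟩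
  ext o
  rcases o with _ | ⟨j, hj⟩
  · rfl
  · exact dif_pos hj

theorem norm_sphereCoordinates_sq (n m : ℕ) (p : (Fin n → ℂ) × ℂ) :
    ‖sphereCoordinates n m p‖ ^ 2 =
      (∑ j : Fin n, if (j : ℕ) < m then ‖p.1 j‖ ^ 2 else 0) + ‖p.2‖ ^ 2 := by
  rw [EuclideanSpace.norm_sq_eq, Fintype.sum_option, add_comm, ← Finset.sum_filter,
    Finset.sum_subtype (p := fun j : Fin n => (j : ℕ) < m) _ (by simp)]
  rfl

theorem Qset_eq_preimage_sphere (n m : ℕ) : Qset n m = sphereCoordinates n m ⁻¹' sphere 0 1 := by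
  ext p
  rw [mem_preimage, mem_sphere_zero_iff_norm, ← pow_eq_one_iff_of_nonneg (norm_nonneg _)
    two_ne_zero, norm_sphereCoordinates_sq, Qset, mem_ofPred_eq]

theorem Bset_eq_preimage_ball (n m : ℕ) : Bset n m = sphereCoordinates n m ⁻¹' ball 0 1 := by
  ext p
  rw [mem_preimage, mem_ball_zero_iff, ← pow_lt_one_iff_of_nonneg (norm_nonneg _) two_ne_zero,
    norm_sphereCoordinates_sq, Bset, mem_ofPred_eq]

theorem one_lt_finrank_sphereCoordinates {n m : ℕ} (hm : 1 ≤ m) (hmn : m ≤ n) :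
    1 < Module.finrank ℂ (EuclideanSpace ℂ (Option {j : Fin n // (j : ℕ) < m})) := by
  have : Nonempty {j : Fin n // (j : ℕ) < m} := ⟨⟨⟨0, hm.trans hmn⟩, hm⟩⟩
  rw [finrank_euclideanSpace, Fintype.card_option]
  exact Nat.lt_add_of_pos_left Fintype.card_pos

end Coordinates

/-- if `f` is holomorphic on a neighbourhood `U` of
`𝒬 = ℂ^{n−m} × S^{2m+1}` (with `m ≥ 1`, so the sphere factor is strictly pseudoconvex,
its Levi form being positive definite) and maps `𝒬` bijectively onto itself, then `f`
extends to a holomorphic automorphism of `ℬ = ℂ^{n−m} × B^{m+1}`: there is a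
biholomorphic self-map `g` of `ℬ` agreeing with `f` near `𝒬`. -/
theorem stmt16 (n m : ℕ) (hm : 1 ≤ m) (hmn : m ≤ n)
    (f : (Fin n → ℂ) × ℂ → (Fin n → ℂ) × ℂ)
    (U : Set ((Fin n → ℂ) × ℂ)) (hUopen : IsOpen U) (hQU : Qset n m ⊆ U)
    (hf : DifferentiableOn ℂ f U)
    (hbij : Set.BijOn f (Qset n m) (Qset n m)) :
    ∃ (g : (Fin n → ℂ) × ℂ → (Fin n → ℂ) × ℂ) (U' : Set ((Fin n → ℂ) × ℂ)),
      IsOpen U' ∧ Qset n m ⊆ U' ∧ U' ⊆ U ∧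
      DifferentiableOn ℂ g (Bset n m) ∧
      Set.BijOn g (Bset n m) (Bset n m) ∧
      Set.EqOn g f (Bset n m ∩ U') := by
  rw [Qset_eq_preimage_sphere] at hQU hbij ⊢
  rw [Bset_eq_preimage_ball]
  exact stmt16_general (sphereCoordinates_surjective n m)
    (one_lt_finrank_sphereCoordinates hm hmn) hUopen hQU hf hbij
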